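/- arXiv:2403.06982 — 2 statements merged into one kernel-verified Lean document; each statement's English description precedes it below -/
import Mathlib

section
/- Let G be a countable infinite residually finite group. Then G is amenable if and only if every Toeplitz G-subshift admits a G-invariant Borel probability measure. -/
open MeasureTheory

/-- The shift action of `G` on `G → A`: `(g • y)(h) = y(g⁻¹h)`. -/
def shiftAct {G A : Type*} [Group G] (g : G) (y : G → A) : G → A :=
  fun h => y (g⁻¹ * h)

/-- A Toeplitz element: every coordinate is periodic with respect to some finite index
subgroup. -/
def IsToeplitz {G A : Type*} [Group G] (x : G → A) : Prop :=
  ∀ g : G, ∃ Γ : Subgroup G, Γ.FiniteIndex ∧ ∀ γ ∈ Γ, x (γ⁻¹ * g) = x g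

/-- The orbit closure of `x` under the shift action. -/
def orbitClosure {G A : Type*} [Group G] [TopologicalSpace A] (x : G → A) :
    Set (G → A) :=
  closure {y : G → A | ∃ g : G, y = shiftAct g x}

/-- Amenability of a countable group, characterized dynamically: every continuous action
on a nonempty compact metric space carries an invariant Borel probability measure. -/
def HasInvariantMeasuresAll (G : Type*) [Group G] : Prop :=
  ∀ (X : Type) [MetricSpace X] [CompactSpace X] [Nonempty X]
    [MeasurableSpace X] [BorelSpace X] (act : G → X → X),
    (∀ g : G, Continuous (act g)) → act 1 = id →
    (∀ g h : G, act (g * h) = act g ∘ act h) →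
    ∃ μ : Measure X, IsProbabilityMeasure μ ∧ ∀ g : G, Measure.map (act g) μ = μ


lemma exists_slow {G ι : Type*} [Group G] [Finite ι] (s : ι → G) (w : G) (η : ℝ) (hη : 0 < η) :
    ∃ ψ : G → ℝ, (∀ g, 0 ≤ ψ g) ∧ (∀ g, ψ g ≤ 1) ∧ ψ w = 1 ∧
      (∀ g i, |ψ g - ψ (g * s i)| ≤ η) ∧ (Function.support ψ).Finite := by
  classical
  cases nonempty_fintype ι
  obtain ⟨L, hL⟩ := exists_nat_gt (1 / η)
  have hLpos : (0 : ℝ) < L := lt_trans (by positivity) hL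
  let step : Finset G → Finset G := fun A =>
    A ∪ (Finset.univ.biUnion fun i => A.image (· * s i)) ∪
      (Finset.univ.biUnion fun i => A.image (· * (s i)⁻¹))
  let W : ℕ → Finset G := fun j => step^[j] {w}
  have hW : ∀ j, W (j + 1) = step (W j) := fun j => Function.iterate_succ_apply' _ _ _
  have hw : ∀ j, w ∈ W j := by
    intro j
    induction j with
    | zero => simp [W]
    | succ j ih => rw [hW]; simp [step, ih]
  have h1 : ∀ j g i, g ∈ W j → g * s i ∈ W (j + 1) := by
    intro j g i h
    rw [hW]
    simp only [step, Finset.mem_union, Finset.mem_biUnion, Finset.mem_univ, true_and,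
      Finset.mem_image]
    exact Or.inl (Or.inr ⟨i, g, h, rfl⟩)
  have h2 : ∀ j g i, g * s i ∈ W j → g ∈ W (j + 1) := by
    intro j g i h
    rw [hW]
    simp only [step, Finset.mem_union, Finset.mem_biUnion, Finset.mem_univ, true_and,
      Finset.mem_image]
    exact Or.inr ⟨i, g * s i, h, by group⟩
  let N : G → ℕ := fun g => ((Finset.range L).filter fun j => g ∈ W j).card
  have hN : ∀ a b : G, (∀ j, a ∈ W j → b ∈ W (j + 1)) → N a ≤ N b + 1 := by
    intro a b hab
    have : ((Finset.range L).filter fun j => a ∈ W j).image Nat.succ ⊆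
        insert L ((Finset.range L).filter fun j => b ∈ W j) := by
      intro j hj
      simp only [Finset.mem_image, Finset.mem_filter, Finset.mem_range] at hj
      obtain ⟨k, ⟨hk, hk'⟩, rfl⟩ := hj
      simp only [Finset.mem_insert, Finset.mem_filter, Finset.mem_range]
      by_cases h : k.succ = L
      · exact Or.inl h
      · exact Or.inr ⟨by omega, hab _ hk'⟩
    have h3 := Finset.card_le_card this
    rw [Finset.card_image_of_injective _ Nat.succ_injective] at h3
    exact h3.trans (Finset.card_insert_le _ _)
  refine ⟨fun g => N g / L, fun g => by positivity, fun g => ?_, ?_, ?_, ?_⟩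
  · rw [div_le_one hLpos]
    have : N g ≤ L := (Finset.card_filter_le _ _).trans (by simp)
    exact_mod_cast this
  · have : N w = L := by simp [N, hw]
    simp only [this]
    exact div_self hLpos.ne'
  · intro g i
    have a1 : (N g : ℝ) ≤ N (g * s i) + 1 := by
      exact_mod_cast hN _ _ (fun j => h1 j g i)
    have a2 : (N (g * s i) : ℝ) ≤ N g + 1 := by
      exact_mod_cast hN _ _ (fun j => h2 j g i)
    rw [← sub_div, abs_div, abs_of_pos hLpos, div_le_iff₀ hLpos]
    have : 1 < L * η := by rwa [div_lt_iff₀ hη] at hL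
    have : |(N g : ℝ) - N (g * s i)| ≤ 1 := by rw [abs_le]; constructor <;> linarith
    linarith
  · refine Set.Finite.subset ((Finset.range L).biUnion W).finite_toSet ?_
    intro g hg
    simp only [Finset.coe_biUnion, Set.mem_iUnion]
    by_contra hcon
    apply hg
    have : N g = 0 := by
      simp only [N, Finset.card_eq_zero, Finset.filter_eq_empty_iff]
      intro j hj hgj
      exact hcon ⟨j, by simpa using hj, hgj⟩
    simp [this]

lemma exists_deep {G : Type*} [Group G]
    (hrf : ∀ g : G, g ≠ 1 → ∃ N : Subgroup G, N.Normal ∧ N.FiniteIndex ∧ g ∉ N)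
    (Γ : Subgroup G) (hΓ : Γ.FiniteIndex) (T : Finset G) :
    ∃ Γ' : Subgroup G, Γ'.FiniteIndex ∧ Γ' ≤ Γ ∧ ∀ g ∈ T, g ∈ Γ' → g = 1 := by
  classical
  induction T using Finset.induction_on with
  | empty => exact ⟨Γ, hΓ, le_rfl, by simp⟩
  | insert a T _ ih =>
    obtain ⟨Γ', h1, h2, h3⟩ := ih
    by_cases ha : a = 1
    · refine ⟨Γ', h1, h2, ?_⟩
      intro g hg
      rcases Finset.mem_insert.1 hg with rfl | hg
      · exact fun _ => ha
      · exact h3 g hg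
    · obtain ⟨N, _, hN, haN⟩ := hrf a ha
      refine ⟨Γ' ⊓ N, inferInstance, inf_le_left.trans h2, ?_⟩
      intro g hg hg'
      rcases Finset.mem_insert.1 hg with rfl | hg
      · exact absurd hg'.2 haN
      · exact h3 g hg hg'.1

lemma toeplitz_step {G ι : Type*} [Group G] [Fintype ι]
    (hrf : ∀ g : G, g ≠ 1 → ∃ N : Subgroup G, N.Normal ∧ N.FiniteIndex ∧ g ∉ N)
    (s : ι → G) (M : ℝ) (hM : 0 ≤ M) (F : G → ι → ℝ) (hF : ∀ g i, |F g i| ≤ M)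
    (c ε : ℝ) (hε : 0 < ε) (hc : ∀ g, c ≤ ∑ i, (F g i - F (g * s i) i))
    (Γ : Subgroup G) (hΓ : Γ.FiniteIndex) (w : G) :
    ∃ (F' : G → ι → ℝ) (Γ' : Subgroup G), Γ'.FiniteIndex ∧ Γ' ≤ Γ ∧ (∀ g i, |F' g i| ≤ M) ∧
      (∀ g, c - ε ≤ ∑ i, (F' g i - F' (g * s i) i)) ∧ (∀ γ ∈ Γ', F' (γ * w) = F' w) ∧
      (∀ g, (∀ γ ∈ Γ, F (γ * g) = F g) → F' g = F g) := by
  classical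
  set η : ℝ := ε / (2 * M * Fintype.card ι + 1) with hη
  have hden : 0 < 2 * M * Fintype.card ι + 1 := by positivity
  have hη0 : 0 < η := by positivity
  obtain ⟨ψ, ψ0, ψ1, ψw, ψs, ψfin⟩ := exists_slow s w η hη0
  let S : Finset G := ψfin.toFinset
  have hS : ∀ g, g ∈ S ↔ ψ g ≠ 0 := by intro g; simp [S]
  let S1 : Finset G := S ∪ Finset.univ.biUnion fun i => S.image (· * (s i)⁻¹)
  let T : Finset G := S1 ∪ Finset.univ.biUnion fun i => S1.image (· * s i)
  have hST : ∀ g ∈ S, g ∈ T := by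
    intro g hg
    exact Finset.mem_union_left _ (Finset.mem_union_left _ hg)
  have hS1T : ∀ g ∈ S1, g ∈ T := fun g hg => Finset.mem_union_left _ hg
  have hS1T' : ∀ g ∈ S1, ∀ i, g * s i ∈ T := by
    intro g hg i
    refine Finset.mem_union_right _ ?_
    simp only [Finset.mem_biUnion, Finset.mem_univ, true_and, Finset.mem_image]
    exact ⟨i, g, hg, rfl⟩
  have hSS1 : ∀ g i, g * s i ∈ S → g ∈ S1 := by
    intro g i hg
    refine Finset.mem_union_right _ ?_
    simp only [Finset.mem_biUnion, Finset.mem_univ, true_and, Finset.mem_image]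
    exact ⟨i, g * s i, hg, by group⟩
  obtain ⟨Γ', hfi, hle, hT⟩ := exists_deep hrf Γ hΓ
    ((T ×ˢ T).image fun p => p.1 * p.2⁻¹)
  have huniq : ∀ g, ∀ γ ∈ Γ', ∀ γ' ∈ Γ', γ⁻¹ * g ∈ T → γ'⁻¹ * g ∈ T → γ = γ' := by
    intro g γ hγ γ' hγ' h h'
    have := hT (γ⁻¹ * g * (γ'⁻¹ * g)⁻¹)
      (Finset.mem_image.2 ⟨(γ⁻¹ * g, γ'⁻¹ * g), Finset.mem_product.2 ⟨h, h'⟩, rfl⟩)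
    have h2 : γ⁻¹ * g * (γ'⁻¹ * g)⁻¹ = γ⁻¹ * γ' := by group
    rw [h2] at this
    have h3 := this (Γ'.mul_mem (Γ'.inv_mem hγ) hγ')
    exact inv_mul_eq_one.1 h3
  let F' : G → ι → ℝ := fun g =>
    if h : ∃ γ ∈ Γ', γ⁻¹ * g ∈ S then
      fun i => F g i + ψ ((h.choose)⁻¹ * g) * (F ((h.choose)⁻¹ * g) i - F g i)
    else F g
  have hF'1 : ∀ g, ∀ γ ∈ Γ', γ⁻¹ * g ∈ T → ∀ i,
      F' g i = F g i + ψ (γ⁻¹ * g) * (F (γ⁻¹ * g) i - F g i) := by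
    intro g γ hγ hg i
    by_cases h : ∃ γ ∈ Γ', γ⁻¹ * g ∈ S
    · have e : h.choose = γ :=
        huniq g _ h.choose_spec.1 _ hγ (hST _ h.choose_spec.2) hg
      simp only [F', dif_pos h, e]
    · have : ψ (γ⁻¹ * g) = 0 := by
        by_contra h0
        exact h ⟨γ, hγ, (hS _).2 h0⟩
      simp only [F', dif_neg h, this]
      ring
  have hF'2 : ∀ g, (¬ ∃ γ ∈ Γ', γ⁻¹ * g ∈ S) → F' g = F g := by
    intro g h
    simp only [F', dif_neg h]
  have hcase : ∀ g, (∃ γ ∈ Γ', γ⁻¹ * g ∈ S) ∨ F' g = F g := fun g => by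
    by_cases h : ∃ γ ∈ Γ', γ⁻¹ * g ∈ S
    · exact Or.inl h
    · exact Or.inr (hF'2 g h)
  have hwS : w ∈ S := by rw [hS, ψw]; exact one_ne_zero
  refine ⟨F', Γ', hfi, hle, ?_, ?_, ?_, ?_⟩
  · intro g i
    rcases hcase g with ⟨γ, hγ, hg⟩ | h
    · rw [hF'1 g γ hγ (hST _ hg)]
      have a := abs_le.1 (hF g i)
      have b := abs_le.1 (hF (γ⁻¹ * g) i)
      have p0 := ψ0 (γ⁻¹ * g)
      have p1 := ψ1 (γ⁻¹ * g)
      rw [abs_le]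
      constructor <;> nlinarith
    · rw [h]; exact hF g i
  · intro g
    by_cases h : ∃ γ ∈ Γ', γ⁻¹ * g ∈ S1
    · obtain ⟨γ, hγ, hg⟩ := h
      set t := ψ (γ⁻¹ * g) with ht
      have e1 : ∀ i, F' g i = F g i + t * (F (γ⁻¹ * g) i - F g i) :=
        hF'1 g γ hγ (hS1T _ hg)
      have e2 : ∀ i, F' (g * s i) i = F (g * s i) i +
          ψ (γ⁻¹ * g * s i) * (F (γ⁻¹ * g * s i) i - F (g * s i) i) := by
        intro i
        have := hF'1 (g * s i) γ hγ (by rw [← mul_assoc]; exact hS1T' _ hg i) i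
        rwa [← mul_assoc] at this
      have key : ∀ i, (1 - t) * (F g i - F (g * s i) i) +
          t * (F (γ⁻¹ * g) i - F (γ⁻¹ * g * s i) i) - η * (2 * M) ≤
          F' g i - F' (g * s i) i := by
        intro i
        rw [e1, e2]
        have hs := ψs (γ⁻¹ * g) i
        rw [← ht] at hs
        have hd : |F (γ⁻¹ * g * s i) i - F (g * s i) i| ≤ 2 * M := by
          have a := abs_le.1 (hF (γ⁻¹ * g * s i) i)
          have b := abs_le.1 (hF (g * s i) i)
          rw [abs_le]; constructor <;> linarith
        have hp : |(t - ψ (γ⁻¹ * g * s i)) * (F (γ⁻¹ * g * s i) i - F (g * s i) i)| ≤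
            η * (2 * M) := by
          rw [abs_mul]
          exact mul_le_mul hs hd (abs_nonneg _) hη0.le
        have := (abs_le.1 hp).1
        linarith
      have hsum := Finset.sum_le_sum (s := Finset.univ) fun i _ => key i
      rw [Finset.sum_sub_distrib, Finset.sum_add_distrib, ← Finset.mul_sum, ← Finset.mul_sum,
        Finset.sum_const, Finset.card_univ, nsmul_eq_mul] at hsum
      have hb : (Fintype.card ι : ℝ) * (η * (2 * M)) ≤ ε := by
        have : η * (2 * M * Fintype.card ι + 1) = ε := by rw [hη]; field_simp
        nlinarith
      have c1 := mul_le_mul_of_nonneg_left (hc g) (sub_nonneg.2 (ψ1 (γ⁻¹ * g)))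
      have c2 := mul_le_mul_of_nonneg_left (hc (γ⁻¹ * g)) (ψ0 (γ⁻¹ * g))
      rw [← ht] at c1 c2
      linarith
    · have e1 : F' g = F g := by
        apply hF'2
        rintro ⟨γ, hγ, hg⟩
        exact h ⟨γ, hγ, Finset.mem_union_left _ hg⟩
      have e2 : ∀ i, F' (g * s i) = F (g * s i) := by
        intro i
        apply hF'2
        rintro ⟨γ, hγ, hg⟩
        exact h ⟨γ, hγ, hSS1 _ i (by rwa [mul_assoc])⟩
      simp only [e1, e2]
      linarith [hc g]
  · intro γ hγ
    funext i
    rw [hF'1 (γ * w) γ hγ (by simpa using hST _ hwS), hF'1 w 1 Γ'.one_mem (by simpa using hST _ hwS)]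
    simp [ψw]
  · intro g hg
    rcases hcase g with ⟨γ, hγ, h⟩ | h
    · funext i
      rw [hF'1 g γ hγ (hST _ h), hg _ (Γ.inv_mem (hle hγ))]
      ring
    · exact h

lemma exists_toeplitz_flow {G ι : Type*} [Group G] [Countable G] [Fintype ι]
    (hrf : ∀ g : G, g ≠ 1 → ∃ N : Subgroup G, N.Normal ∧ N.FiniteIndex ∧ g ∉ N)
    (s : ι → G) (M : ℝ) (hM : 0 ≤ M) (F : G → ι → ℝ) (hF : ∀ g i, |F g i| ≤ M)
    (hc : ∀ g, 1 ≤ ∑ i, (F g i - F (g * s i) i)) :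
    ∃ E : G → ι → ℝ, (∀ g i, |E g i| ≤ M) ∧ (∀ g, 1 / 2 ≤ ∑ i, (E g i - E (g * s i) i)) ∧
      IsToeplitz E := by
  classical
  obtain ⟨e, he⟩ := exists_surjective_nat G
  let cc : ℕ → ℝ := fun n => 1 / 2 + (1 / 2) ^ (n + 1)
  let St := {p : ℕ × (G → ι → ℝ) × Subgroup G // p.2.2.FiniteIndex ∧ (∀ g i, |p.2.1 g i| ≤ M) ∧
    ∀ g, cc p.1 ≤ ∑ i, (p.2.1 g i - p.2.1 (g * s i) i)}
  have hstep : ∀ p : St, ∃ q : St, q.1.1 = p.1.1 + 1 ∧ q.1.2.2 ≤ p.1.2.2 ∧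
      (∀ γ ∈ q.1.2.2, q.1.2.1 (γ * e p.1.1) = q.1.2.1 (e p.1.1)) ∧
      (∀ g, (∀ γ ∈ p.1.2.2, p.1.2.1 (γ * g) = p.1.2.1 g) → q.1.2.1 g = p.1.2.1 g) := by
    rintro ⟨⟨n, F, Γ⟩, h1, h2, h3⟩
    obtain ⟨F', Γ', a1, a2, a3, a4, a5, a6⟩ := toeplitz_step hrf s M hM F h2 (cc n)
      ((1 / 2) ^ (n + 2)) (by positivity) h3 Γ h1 (e n)
    refine ⟨⟨⟨n + 1, F', Γ'⟩, a1, a3, ?_⟩, rfl, a2, a5, a6⟩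
    intro g
    refine le_trans (le_of_eq ?_) (a4 g)
    simp only [cc]
    ring
  choose nx n1 n2 n3 n4 using hstep
  let p0 : St := ⟨⟨0, F, ⊤⟩, inferInstance, hF, fun g => by
    have := hc g
    simp only [cc]
    norm_num
    simpa using this⟩
  let P : ℕ → St := fun n => nx^[n] p0
  have hP : ∀ n, P (n + 1) = nx (P n) := fun n => Function.iterate_succ_apply' _ _ _
  have hPn : ∀ n, (P n).1.1 = n := by
    intro n
    induction n with
    | zero => rfl
    | succ n ih => rw [hP, n1, ih]
  let Q : ℕ → G → Prop := fun n g => ∀ γ ∈ (P n).1.2.2, (P n).1.2.1 (γ * g) = (P n).1.2.1 g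
  have hQ0 : ∀ n, Q (n + 1) (e n) := by
    intro n γ hγ
    have := n3 (P n)
    rw [hPn n, ← hP] at this
    exact this γ hγ
  have hQ1 : ∀ n g, Q n g → (P (n + 1)).1.2.1 g = (P n).1.2.1 g := by
    intro n g h
    rw [hP]
    exact n4 (P n) g h
  have hQ2 : ∀ n g, Q n g → Q (n + 1) g := by
    intro n g h γ hγ
    have hγ' : γ ∈ (P n).1.2.2 := by
      rw [hP] at hγ
      exact n2 _ hγ
    have : Q n (γ * g) := by
      intro δ hδ
      rw [← mul_assoc, h _ (mul_mem hδ hγ'), h _ hγ']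
    rw [hQ1 n g h, hQ1 n _ this, h _ hγ']
  choose r hr using he
  let E : G → ι → ℝ := fun g => (P (r g + 1)).1.2.1 g
  have hE : ∀ g n, r g + 1 ≤ n → Q n g ∧ (P n).1.2.1 g = E g := by
    intro g n hn
    induction n, hn using Nat.le_induction with
    | base =>
      have := hQ0 (r g)
      rw [hr] at this
      exact ⟨this, rfl⟩
    | succ n hn ih => exact ⟨hQ2 _ _ ih.1, (hQ1 _ _ ih.1).trans ih.2⟩
  refine ⟨E, fun g i => (P (r g + 1)).2.2.1 g i, ?_, ?_⟩
  · intro g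
    let n := (r g + 1) + ∑ i, (r (g * s i) + 1)
    have e1 : (P n).1.2.1 g = E g := (hE g n (Nat.le_add_right _ _)).2
    have e2 : ∀ i, (P n).1.2.1 (g * s i) = E (g * s i) := by
      intro i
      refine (hE _ n ?_).2
      exact (Finset.single_le_sum (f := fun i => r (g * s i) + 1) (fun _ _ => Nat.zero_le _)
        (Finset.mem_univ i)).trans (Nat.le_add_left _ _)
    have := (P n).2.2.2 g
    simp only [e1, e2] at this
    refine le_trans ?_ this
    simp only [cc]
    have : (0 : ℝ) ≤ (1 / 2) ^ ((P n).1.1 + 1) := by positivity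
    linarith
  · intro g
    refine ⟨(P (r g + 1)).1.2.2, (P (r g + 1)).2.1, ?_⟩
    intro γ hγ
    have hγ' := inv_mem hγ
    have hq : Q (r g + 1) g := (hE g _ le_rfl).1
    have hq' : Q (r g + 1) (γ⁻¹ * g) := by
      intro δ hδ
      rw [← mul_assoc, hq _ (mul_mem hδ hγ'), hq _ hγ']
    have hstay : ∀ n, r g + 1 ≤ n → Q n (γ⁻¹ * g) ∧
        (P n).1.2.1 (γ⁻¹ * g) = (P (r g + 1)).1.2.1 (γ⁻¹ * g) := by
      intro n hn
      induction n, hn using Nat.le_induction with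
      | base => exact ⟨hq', rfl⟩
      | succ n hn ih => exact ⟨hQ2 _ _ ih.1, (hQ1 _ _ ih.1).trans ih.2⟩
    rw [← (hE (γ⁻¹ * g) _ (le_max_left (r (γ⁻¹ * g) + 1) (r g + 1))).2,
      (hstay _ (le_max_right (r (γ⁻¹ * g) + 1) (r g + 1))).2, hq _ hγ']


lemma exists_flow {G X : Type*} [Group G] [MetricSpace X] [CompactSpace X] [Nonempty X]
    [MeasurableSpace X] [BorelSpace X] (act : G → X → X)
    (hcont : ∀ g : G, Continuous (act g))
    (hmul : ∀ g h : G, act (g * h) = act g ∘ act h)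
    (hno : ¬ ∃ μ : Measure X, IsProbabilityMeasure μ ∧ ∀ g : G, Measure.map (act g) μ = μ) :
    ∃ (S : Finset G) (s : S → G) (M : ℝ) (F : G → S → ℝ), 0 ≤ M ∧ (∀ g i, |F g i| ≤ M) ∧
      ∀ g, 1 ≤ ∑ i, (F g i - F (g * s i) i) := by
  classical
  let τ : G → C(X, ℝ) →ₗ[ℝ] C(X, ℝ) := fun g =>
    { toFun := fun φ => φ - φ.comp ⟨act g, hcont g⟩
      map_add' := by intro a b; ext x; simp; ring
      map_smul' := by intro a b; ext x; simp; ring }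
  let T : (G →₀ C(X, ℝ)) →ₗ[ℝ] C(X, ℝ) := Finsupp.lsum ℝ τ
  let U : Set C(X, ℝ) := {f | ∀ x, 0 < f x}
  by_cases hdis : Disjoint U (LinearMap.range T : Set C(X, ℝ))
  · exfalso
    apply hno
    have hUo : IsOpen U := by
      have := ContinuousMap.isOpen_setOfPred_mapsTo (X := X) (Y := ℝ) isCompact_univ
        (isOpen_Ioi (a := (0 : ℝ)))
      convert this using 1
      ext f
      simp [U, Set.MapsTo]
    have hUc : Convex ℝ U := by
      intro f hf g hg a b ha hb hab x
      have h1 := hf x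
      have h2 := hg x
      simp only [ContinuousMap.add_apply, ContinuousMap.smul_apply, smul_eq_mul]
      rcases ha.eq_or_lt with rfl | ha
      · have : b = 1 := by linarith
        subst this
        simpa using h2
      · have := mul_pos ha h1
        have := mul_nonneg hb h2.le
        linarith
    obtain ⟨f, u, hfU, hfV⟩ := geometric_hahn_banach_open hUc hUo
      (LinearMap.range T).convex hdis
    have hu0 : u ≤ 0 := by simpa using hfV 0 (Submodule.zero_mem _)
    have hV : ∀ v ∈ LinearMap.range T, f v = 0 := by
      intro v hv
      by_contra hne
      have := hfV (((u - 1) / f v) • v) (Submodule.smul_mem _ _ hv)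
      rw [map_smul, smul_eq_mul, div_mul_cancel₀ _ hne] at this
      linarith
    have h1U : (1 : C(X, ℝ)) ∈ U := fun x => by simp
    have hf1 : f 1 < 0 := (hfU 1 h1U).trans_le hu0
    have hpos : ∀ φ : C(X, ℝ), (∀ x, 0 ≤ φ x) → f φ ≤ 0 := by
      intro φ hφ
      by_contra! hlt
      have := hfU (φ + (f φ / (-f 1)) • 1) (by
        intro x
        have : 0 < f φ / (-f 1) := div_pos hlt (by linarith)
        have := hφ x
        simp only [ContinuousMap.add_apply, ContinuousMap.smul_apply, smul_eq_mul,
          ContinuousMap.one_apply]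
        linarith)
      rw [map_add, map_smul, smul_eq_mul] at this
      have h3 : f φ / (-f 1) * f 1 = - f φ := by
        rw [div_neg, neg_mul, div_mul_cancel₀ _ hf1.ne]
      linarith
    let Λ0 : CompactlySupportedContinuousMap X ℝ →ₗ[ℝ] ℝ :=
      { toFun := fun φ => f φ.toContinuousMap / f 1
        map_add' := by
          intro a b
          rw [← add_div, ← map_add]
          rfl
        map_smul' := by
          intro a b
          rw [RingHom.id_apply, smul_eq_mul, ← mul_div_assoc, ← smul_eq_mul, ← map_smul]
          rfl }
    let Λ : CompactlySupportedContinuousMap X ℝ →ₚ[ℝ] ℝ :=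
      PositiveLinearMap.mk₀ Λ0 (by
        intro φ hφ
        exact div_nonneg_of_nonpos (hpos _ (fun x => hφ x)) hf1.le)
    let μ := RealRMK.rieszMeasure Λ
    have hintegral : ∀ φ : C(X, ℝ), ∫ x, φ x ∂μ = f φ / f 1 := by
      intro φ
      exact RealRMK.integral_rieszMeasure Λ
        (CompactlySupportedContinuousMap.continuousMapEquiv φ)
    have hμfin : IsFiniteMeasure μ := by
      have : IsFiniteMeasureOnCompacts μ := by
        infer_instance
      infer_instance
    have hμ1 : IsProbabilityMeasure μ := by
      have h := hintegral 1
      rw [div_self hf1.ne] at h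
      simp only [ContinuousMap.one_apply, integral_const, smul_eq_mul, mul_one] at h
      exact ⟨by
        rw [← ENNReal.ofReal_toReal (measure_ne_top μ Set.univ)]
        change μ.real Set.univ = 1 at h
        rw [Measure.real] at h
        rw [h]
        simp⟩
    refine ⟨μ, hμ1, fun g => ?_⟩
    haveI := Measure.isProbabilityMeasure_map (μ := μ) (hcont g).measurable.aemeasurable
    apply ext_of_forall_integral_eq_of_IsFiniteMeasure
    intro φ
    rw [integral_map (hcont g).measurable.aemeasurable
      φ.continuous.measurable.aestronglyMeasurable]
    have e1 := hintegral φ.toContinuousMap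
    have e2 := hintegral (φ.toContinuousMap.comp ⟨act g, hcont g⟩)
    have e3 := hV (T (Finsupp.single g φ.toContinuousMap)) ⟨_, rfl⟩
    have e4 : T (Finsupp.single g φ.toContinuousMap) =
        φ.toContinuousMap - φ.toContinuousMap.comp ⟨act g, hcont g⟩ := by
      change Finsupp.lsum ℝ τ (Finsupp.single g φ.toContinuousMap) = _
      rw [Finsupp.lsum_single]
      rfl
    rw [e4, map_sub, sub_eq_zero] at e3
    rw [← e3, ← e1] at e2
    exact e2
  · rw [Set.not_disjoint_iff] at hdis
    obtain ⟨v, hvU, a, rfl⟩ := hdis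
    obtain ⟨x1, -, hx1⟩ := isCompact_univ.exists_isMinOn (Set.univ_nonempty (α := X))
      (T a).continuous.continuousOn
    have hδ : 0 < T a x1 := hvU x1
    set δ := T a x1 with hδdef
    have hmin : ∀ x, δ ≤ T a x := fun x => hx1 (Set.mem_univ x)
    have hTa : ∀ x, T a x = ∑ i : a.support, (a i x - a i (act i x)) := by
      intro x
      have h1 : T a = ∑ i ∈ a.support, τ i (a i) := by
        simp [T, Finsupp.lsum_apply, Finsupp.sum]
      rw [h1, ← Finset.sum_coe_sort, ContinuousMap.sum_apply]
      rfl
    let x0 : X := Classical.arbitrary X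
    let F : G → a.support → ℝ := fun g i => δ⁻¹ * a i (act g⁻¹ x0)
    refine ⟨a.support, fun i => (i : G)⁻¹, δ⁻¹ * ∑ i : a.support, ‖a i‖, F, by positivity, ?_, ?_⟩
    · intro g i
      simp only [F]
      rw [abs_mul, abs_of_pos (inv_pos.2 hδ)]
      refine mul_le_mul_of_nonneg_left ?_ (inv_pos.2 hδ).le
      refine ((a i).norm_coe_le_norm _).trans ?_
      exact Finset.single_le_sum (f := fun i : a.support => ‖a i‖) (fun _ _ => norm_nonneg _)
        (Finset.mem_univ i)
    · intro g
      have := hmin (act g⁻¹ x0)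
      rw [hTa] at this
      have h2 : ∑ i, (F g i - F (g * (i : G)⁻¹) i) =
          δ⁻¹ * ∑ i : a.support, (a i (act g⁻¹ x0) - a i (act i (act g⁻¹ x0))) := by
        rw [Finset.mul_sum]
        refine Finset.sum_congr rfl fun i _ => ?_
        simp only [F, mul_inv_rev, inv_inv, hmul, Function.comp_apply]
        ring
      rw [h2]
      have := mul_le_mul_of_nonneg_left this (inv_pos.2 hδ).le
      rwa [inv_mul_cancel₀ hδ.ne'] at this

lemma exists_rounding {ι : Type*} [Fintype ι] (M ε : ℝ) (hε : 0 < ε) :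
    ∃ (m : ℕ) (r : (ι → ℝ) → Fin (m + 2)) (d : Fin (m + 2) → ι → ℝ),
      ∀ v : ι → ℝ, (∀ i, |v i| ≤ M) → ∀ i, |d (r v) i - v i| ≤ ε := by
  classical
  have hc : IsCompact (Set.univ.pi fun _ : ι => Set.Icc (-M) M) :=
    isCompact_univ_pi fun _ => isCompact_Icc
  obtain ⟨t, -, htf, ht⟩ := hc.finite_cover_balls hε
  lift t to Finset (ι → ℝ) using htf
  let en := t.equivFin
  let d : Fin (t.card + 2) → ι → ℝ := fun k =>
    if h : (k : ℕ) < t.card then (en.symm ⟨k, h⟩ : ι → ℝ) else 0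
  have hd : ∀ v : ι → ℝ, ∃ k, (∀ i, |v i| ≤ M) → ∀ i, |d k i - v i| ≤ ε := by
    intro v
    by_cases hv : ∀ i, |v i| ≤ M
    · have hv' : v ∈ Set.univ.pi fun _ : ι => Set.Icc (-M) M :=
        fun i _ => abs_le.1 (hv i)
      have := ht hv'
      simp only [Set.mem_iUnion] at this
      obtain ⟨p, hp, hpv⟩ := this
      have hp' : p ∈ t := hp
      refine ⟨⟨en ⟨p, hp'⟩, by have := (en ⟨p, hp'⟩).2; omega⟩, fun _ i => ?_⟩
      have : d ⟨en ⟨p, hp'⟩, by have := (en ⟨p, hp'⟩).2; omega⟩ = p := by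
        simp [d]
      rw [this]
      have h1 := dist_le_pi_dist v p i
      have h2 := Metric.mem_ball.1 hpv
      rw [Real.dist_eq, abs_sub_comm] at h1
      linarith
    · exact ⟨0, fun h => absurd h hv⟩
  choose r hr using hd
  exact ⟨t.card, r, d, hr⟩

lemma no_measure {G ι : Type*} [Group G] [Countable G] [Fintype ι] (m : ℕ) (x : G → Fin (m + 2))
    (s : ι → G) (d : Fin (m + 2) → ι → ℝ) (c : ℝ) (hc : 0 < c)
    (h : ∀ g, c ≤ ∑ i, (d (x g) i - d (x (g * s i)) i))
    (μ : Measure (G → Fin (m + 2))) (hμ : IsProbabilityMeasure μ)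
    (hx : μ (orbitClosure x) = 1) (hinv : ∀ g : G, Measure.map (shiftAct g) μ = μ) : False := by
  have hms : ∀ g : G, Measurable (shiftAct (A := Fin (m + 2)) g) := fun g =>
    measurable_pi_lambda _ fun h => measurable_pi_apply _
  have hcd : ∀ i, Continuous fun k => d k i := fun i => continuous_of_discreteTopology
  have hcont : ∀ (g : G) i, Continuous fun y : G → Fin (m + 2) => d (y g) i :=
    fun g i => (hcd i).comp (continuous_apply g)
  have hsub : orbitClosure x ⊆ {y | c ≤ ∑ i, (d (y 1) i - d (y (s i)) i)} := by
    apply closure_minimal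
    · rintro y ⟨g, rfl⟩
      have := h g⁻¹
      simpa [shiftAct] using this
    · apply isClosed_le continuous_const
      exact continuous_finsetSum _ fun i _ => (hcont 1 i).sub (hcont (s i) i)
  have hae : ∀ᵐ y ∂μ, c ≤ ∑ i, (d (y 1) i - d (y (s i)) i) := by
    have h1 : ∀ᵐ y ∂μ, y ∈ orbitClosure x := by
      rw [← mem_ae_iff_prob_eq_one₀] at hx
      · exact hx
      · exact isClosed_closure.measurableSet.nullMeasurableSet
    exact h1.mono fun y hy => hsub hy
  have hbd : ∀ (g : G) i, Integrable (fun y : G → Fin (m + 2) => d (y g) i) μ := by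
    intro g i
    refine Integrable.of_bound (C := ∑ k, |d k i|)
      ((hcont g i).measurable.aestronglyMeasurable) (Filter.Eventually.of_forall fun y => ?_)
    exact Finset.single_le_sum (f := fun k => |d k i|) (fun _ _ => abs_nonneg _)
      (Finset.mem_univ (y g))
  have heq : ∀ (g : G) i, ∫ y, d (y g) i ∂μ = ∫ y, d (y 1) i ∂μ := by
    intro g i
    conv_rhs => rw [← hinv g⁻¹]
    rw [integral_map (hms _).aemeasurable ((hcont 1 i).measurable.aestronglyMeasurable)]
    simp [shiftAct]
  have h0 : ∫ y, ∑ i, (d (y 1) i - d (y (s i)) i) ∂μ = 0 := by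
    rw [integral_finsetSum (f := fun i (y : G → Fin (m + 2)) => d (y 1) i - d (y (s i)) i) _
      fun i _ => (hbd 1 i).sub (hbd (s i) i)]
    refine Finset.sum_eq_zero fun i _ => ?_
    rw [integral_sub (hbd 1 i) (hbd (s i) i), heq (s i), sub_self]
  have h1 : ∫ _, c ∂μ ≤ ∫ y, ∑ i, (d (y 1) i - d (y (s i)) i) ∂μ :=
    integral_mono_ae (integrable_const c)
      (integrable_finsetSum _ fun i _ => (hbd 1 i).sub (hbd (s i) i)) hae
  rw [h0] at h1
  simp at h1
  linarith

lemma forward {G : Type*} [Group G] [Countable G] [Infinite G]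
    (hG : HasInvariantMeasuresAll G) (m : ℕ) (x : G → Fin (m + 2)) :
    ∃ μ : Measure (G → Fin (m + 2)), IsProbabilityMeasure μ ∧
        μ (orbitClosure x) = 1 ∧ ∀ g : G, Measure.map (shiftAct g) μ = μ := by
  obtain ⟨⟨e⟩⟩ := nonempty_denumerable_iff.2 ⟨‹Countable G›, ‹Infinite G›⟩ |>.map fun h =>
    (⟨@Denumerable.eqv G h⟩ : Nonempty (G ≃ ℕ))
  have hsc : ∀ g : G, Continuous (shiftAct (A := Fin (m + 2)) g) := fun g =>
    continuous_pi fun h => continuous_apply _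
  have hshift_mul : ∀ (g h : G) (y : G → Fin (m + 2)),
      shiftAct (g * h) y = shiftAct g (shiftAct h y) := by
    intro g h y
    funext k
    simp [shiftAct, mul_assoc]
  have hinv : ∀ g : G, ∀ y ∈ orbitClosure x, shiftAct g y ∈ orbitClosure x := by
    intro g y hy
    refine map_mem_closure (hsc g) hy ?_
    rintro _ ⟨h, rfl⟩
    exact ⟨g * h, (hshift_mul g h x).symm⟩
  have hx : x ∈ orbitClosure x := subset_closure ⟨1, by funext k; simp [shiftAct]⟩
  let j : (ℕ → Fin (m + 2)) → (G → Fin (m + 2)) := fun z g => z (e g)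
  let j' : (G → Fin (m + 2)) → (ℕ → Fin (m + 2)) := fun y n => y (e.symm n)
  have hj : Continuous j := continuous_pi fun g => continuous_apply _
  have hj' : Continuous j' := continuous_pi fun g => continuous_apply _
  have hjj' : ∀ y, j (j' y) = y := fun y => by funext g; simp [j, j']
  have hj'j : ∀ y, j' (j y) = y := fun y => by funext g; simp [j, j']
  let Z : Set (ℕ → Fin (m + 2)) := j ⁻¹' orbitClosure x
  have hZ : IsClosed Z := isClosed_closure.preimage hj
  haveI : CompactSpace Z := isCompact_iff_compactSpace.1 hZ.isCompact
  haveI : Nonempty Z := ⟨⟨j' x, by change j (j' x) ∈ orbitClosure x; rwa [hjj']⟩⟩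
  letI : MetricSpace Z := TopologicalSpace.metrizableSpaceMetric Z
  let act : G → Z → Z := fun g z => ⟨j' (shiftAct g (j z)), by
    change j (j' (shiftAct g (j z))) ∈ orbitClosure x
    rw [hjj']
    exact hinv g _ z.2⟩
  obtain ⟨μ, hμ, hμi⟩ := hG Z act
    (fun g => Continuous.subtype_mk (hj'.comp ((hsc g).comp (hj.comp continuous_subtype_val))) _)
    (by
      funext z
      apply Subtype.ext
      change j' (shiftAct 1 (j z)) = z
      have : shiftAct 1 (j z) = j z := by funext k; simp [shiftAct]
      rw [this, hj'j])
    (by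
      intro g h
      funext z
      apply Subtype.ext
      change j' (shiftAct (g * h) (j z)) = j' (shiftAct g (j (j' (shiftAct h (j z)))))
      rw [hjj', hshift_mul])
  let q : Z → (G → Fin (m + 2)) := fun z => j z
  have hq : Measurable q := (hj.comp continuous_subtype_val).measurable
  have hact : ∀ g, Measurable (act g) := fun g =>
    (Continuous.subtype_mk (hj'.comp ((hsc g).comp (hj.comp continuous_subtype_val)))
      _).measurable
  refine ⟨μ.map q, Measure.isProbabilityMeasure_map hq.aemeasurable, ?_, fun g => ?_⟩
  · have hcl : IsClosed (orbitClosure x) := isClosed_closure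
    rw [Measure.map_apply hq hcl.measurableSet]
    have : q ⁻¹' orbitClosure x = Set.univ :=
      Set.eq_univ_of_forall fun z => z.2
    rw [this, measure_univ]
  · rw [Measure.map_map (hsc g).measurable hq]
    conv_rhs => rw [← hμi g]
    rw [Measure.map_map hq (hact g)]
    congr 1
    funext z
    exact (hjj' _).symm

/-- a countable infinite residually finite group is amenable iff every
Toeplitz G-subshift admits a G-invariant Borel probability measure. -/
theorem stmt_18 {G : Type*} [Group G] [Countable G] [Infinite G]
    (hrf : ∀ g : G, g ≠ 1 → ∃ N : Subgroup G, N.Normal ∧ N.FiniteIndex ∧ g ∉ N) :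
    HasInvariantMeasuresAll G ↔
    ∀ (m : ℕ) (x : G → Fin (m + 2)), IsToeplitz x →
      ∃ μ : Measure (G → Fin (m + 2)), IsProbabilityMeasure μ ∧
        μ (orbitClosure x) = 1 ∧ ∀ g : G, Measure.map (shiftAct g) μ = μ := by
  constructor
  · intro hG m x _
    exact forward hG m x
  · intro hT X _ _ _ _ _ act hcont _ hmul
    by_contra hno
    obtain ⟨S, s, M, F, hM, hF, hc⟩ := exists_flow act hcont hmul hno
    obtain ⟨E, hE, hEc, hET⟩ := exists_toeplitz_flow hrf s M hM F hF hc
    set ε : ℝ := 1 / (8 * (Fintype.card S + 1)) with hε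
    have hε0 : 0 < ε := by positivity
    obtain ⟨m, r, d, hrd⟩ := exists_rounding (ι := S) M ε hε0
    obtain ⟨μ, h1, h2, h3⟩ := hT m (fun g => r (E g)) (by
      intro g
      obtain ⟨Γ, hΓ, h⟩ := hET g
      exact ⟨Γ, hΓ, fun γ hγ => congrArg r (h γ hγ)⟩)
    refine no_measure m (fun g => r (E g)) s d (1 / 4) (by norm_num) ?_ μ h1 h2 h3
    intro g
    have key : ∀ i, (E g i - E (g * s i) i) - 2 * ε ≤
        d (r (E g)) i - d (r (E (g * s i))) i := by
      intro i
      have a := abs_le.1 (hrd (E g) (hE g) i)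
      have b := abs_le.1 (hrd (E (g * s i)) (hE _) i)
      linarith
    have hsum := Finset.sum_le_sum (s := Finset.univ) fun i _ => key i
    rw [Finset.sum_sub_distrib, Finset.sum_const, Finset.card_univ, nsmul_eq_mul] at hsum
    have hb : ε * (8 * (Fintype.card S + 1)) = 1 := by rw [hε]; field_simp
    have := hEc g
    nlinarith
end

section
/- Let G be a non-amenable residually finite countable group and (Z,G) any minimal equicontinuous Cantor system with a free orbit. Then there exists a Toeplitz G-subshift with no G-invariant Borel probability measures whose maximal equicontinuous factor is (Z,G). -/
open MeasureTheory

namespace Toep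
open scoped Pointwise
open scoped Classical in
/-- Suppliers of the finite set `A`. -/
noncomputable def nb {G : Type*} [Group G] (K : Finset G) (S : G → Finset G) (A : Finset G) :
    Finset G := (A * K⁻¹).filter (fun g => ∃ k ∈ S g, g * k ∈ A)

/-- Indecomposable finite set. -/
def Conn {G : Type*} [Group G] (K A : Finset G) : Prop :=
  ∀ B ⊆ A, B.Nonempty → B ≠ A → ∃ b ∈ B, ∃ a ∈ A, a ∉ B ∧ ∃ k ∈ K, ∃ k' ∈ K, b⁻¹ * a = k⁻¹ * k'

/-- A system of allowed values which can be completed, with slack. -/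
structure Good {G : Type*} [Group G] (K : Finset G) (S : G → Finset G) : Prop where
  sub : ∀ g, S g ⊆ K
  ne : ∀ g, (S g).Nonempty
  hall : ∀ A, 2 * A.card ≤ (nb K S A).card
  slack : ∃ M R : ℕ, 0 < M ∧ ∀ A, Conn K A → R ≤ A.card →
    (2 * M + 1) * A.card ≤ M * (nb K S A).card

section
variable {G : Type*} [Group G] {K : Finset G} {S : G → Finset G}

open scoped Classical in
lemma mem_nb (hS : ∀ g, S g ⊆ K) {A : Finset G} {g : G} :
    g ∈ nb K S A ↔ ∃ k ∈ S g, g * k ∈ A := by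
  unfold nb
  rw [Finset.mem_filter, and_iff_right_iff_imp]
  rintro ⟨k, hk, hA⟩
  rw [Finset.mem_mul]
  exact ⟨g * k, hA, k⁻¹, Finset.inv_mem_inv (hS g hk), by group⟩

open scoped Classical in
lemma hall_of_conn (hS : ∀ g, S g ⊆ K)
    (h : ∀ A, Conn K A → 2 * A.card ≤ (nb K S A).card) (A : Finset G) :
    2 * A.card ≤ (nb K S A).card := by
  induction A using Finset.strongInduction with
  | H A ih =>
    by_cases hc : Conn K A
    · exact h A hc
    · unfold Conn at hc
      push Not at hc
      obtain ⟨B, hBA, hB, hne, hsep⟩ := hc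
      have h1 := ih B (hBA.ssubset_of_ne hne)
      have h2 := ih (A \ B) (Finset.sdiff_ssubset hBA hB)
      have hd : Disjoint (nb K S B) (nb K S (A \ B)) := by
        rw [Finset.disjoint_left]
        intro g hg hg'
        rw [mem_nb hS] at hg hg'
        obtain ⟨k, hk, hkB⟩ := hg
        obtain ⟨k', hk', hkB'⟩ := hg'
        rw [Finset.mem_sdiff] at hkB'
        exact hsep _ hkB _ hkB'.1 hkB'.2 k (hS g hk) k' (hS g hk') (by group)
      have hs : nb K S B ∪ nb K S (A \ B) ⊆ nb K S A := by
        intro g hg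
        rw [Finset.mem_union, mem_nb hS, mem_nb hS] at hg
        rw [mem_nb hS]
        rcases hg with ⟨k, hk, hkB⟩ | ⟨k, hk, hkB⟩
        · exact ⟨k, hk, hBA hkB⟩
        · exact ⟨k, hk, (Finset.mem_sdiff.1 hkB).1⟩
      have h3 := Finset.card_le_card hs
      rw [Finset.card_union_of_disjoint hd] at h3
      have h4 := Finset.card_sdiff_add_card_eq_card hBA
      omega

open scoped Classical in
lemma exists_sel (hK : Good K S) : ∃ c : G → G, (∀ g, c g ∈ S g) ∧
    ∀ A : Finset G, 2 * A.card ≤ (nb K (fun g => {c g}) A).card := by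
  have hH := (Finset.all_card_le_biUnion_card_iff_exists_injective
    (fun p : G × Fin 2 => nb K S {p.1})).1 (by
      intro s
      have h1 : s ⊆ s.image Prod.fst ×ˢ (Finset.univ : Finset (Fin 2)) := by
        intro p hp
        simp only [Finset.mem_product, Finset.mem_univ, and_true, Finset.mem_image]
        exact ⟨p, hp, rfl⟩
      have h2 := Finset.card_le_card h1
      rw [Finset.card_product, Finset.card_fin] at h2
      have h3 := hK.hall (s.image Prod.fst)
      have h4 : nb K S (s.image Prod.fst) ⊆ s.biUnion (fun p : G × Fin 2 => nb K S {p.1}) := by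
        intro g hg
        rw [mem_nb hK.sub] at hg
        obtain ⟨k, hk, hkA⟩ := hg
        obtain ⟨p, hp, hpe⟩ := Finset.mem_image.1 hkA
        refine Finset.mem_biUnion.2 ⟨p, hp, ?_⟩
        rw [mem_nb hK.sub]
        exact ⟨k, hk, by simp [hpe]⟩
      have h5 := Finset.card_le_card h4
      omega)
  obtain ⟨φ, hφ, hmem⟩ := hH
  have hex : ∀ g : G, ∃ k ∈ S g, ∀ p, φ p = g → g * k = p.1 := by
    intro g
    by_cases h : ∃ p, φ p = g
    · obtain ⟨p, rfl⟩ := h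
      have := hmem p
      rw [mem_nb hK.sub] at this
      obtain ⟨k, hk, hkp⟩ := this
      refine ⟨k, hk, fun q hq => ?_⟩
      rw [hφ hq]
      simpa using hkp
    · obtain ⟨k, hk⟩ := hK.ne g
      exact ⟨k, hk, fun p hp => absurd ⟨p, hp⟩ h⟩
  choose c hc hcp using hex
  refine ⟨c, hc, fun A => ?_⟩
  have h1 : (A ×ˢ (Finset.univ : Finset (Fin 2))).image φ ⊆ nb K (fun g => {c g}) A := by
    intro g hg
    obtain ⟨p, hp, rfl⟩ := Finset.mem_image.1 hg
    rw [mem_nb (fun g => by simpa using hK.sub g (hc g))]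
    refine ⟨c (φ p), by simp, ?_⟩
    rw [hcp _ p rfl]
    exact (Finset.mem_product.1 hp).1
  have h2 := Finset.card_le_card h1
  rw [Finset.card_image_of_injective _ hφ, Finset.card_product, Finset.card_fin] at h2
  omega

open scoped Classical in
lemma conn_ball {A : Finset G} (hA : Conn K A) {a : G} (ha : a ∈ A) (hKne : K.Nonempty) (j : ℕ) :
    A.filter (fun b => a⁻¹ * b ∈ (K⁻¹ * K) ^ j) = A ∨
      j + 1 ≤ (A.filter (fun b => a⁻¹ * b ∈ (K⁻¹ * K) ^ j)).card := by
  induction j with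
  | zero =>
    right
    simp only [zero_add, Finset.one_le_card]
    exact ⟨a, by simp [ha]⟩
  | succ j ih =>
    have h1 : (1 : G) ∈ K⁻¹ * K := by
      obtain ⟨k, hk⟩ := hKne
      exact Finset.mem_mul.2 ⟨k⁻¹, Finset.inv_mem_inv hk, k, hk, by group⟩
    have hmono : A.filter (fun b => a⁻¹ * b ∈ (K⁻¹ * K) ^ j) ⊆
        A.filter (fun b => a⁻¹ * b ∈ (K⁻¹ * K) ^ (j + 1)) := by
      intro b hb
      rw [Finset.mem_filter] at hb ⊢
      exact ⟨hb.1, Finset.pow_subset_pow_right h1 (Nat.le_succ j) hb.2⟩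
    by_cases hE : A.filter (fun b => a⁻¹ * b ∈ (K⁻¹ * K) ^ j) = A
    · left
      exact le_antisymm (Finset.filter_subset _ _) (hE.symm.le.trans hmono)
    · right
      have h2 := ih.resolve_left hE
      have ha0 : a ∈ A.filter (fun b => a⁻¹ * b ∈ (K⁻¹ * K) ^ j) := by
        rw [Finset.mem_filter]
        refine ⟨ha, ?_⟩
        rw [inv_mul_cancel]
        exact Finset.one_mem_pow h1
      obtain ⟨b, hb, a', ha', hab, k, hk, k', hk', hkk⟩ := hA _ (Finset.filter_subset _ _) ⟨a, ha0⟩ hE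
      have : A.filter (fun b => a⁻¹ * b ∈ (K⁻¹ * K) ^ j) ⊂
          A.filter (fun b => a⁻¹ * b ∈ (K⁻¹ * K) ^ (j + 1)) := by
        refine (Finset.ssubset_iff_of_subset hmono).2 ⟨a', ?_, hab⟩
        rw [Finset.mem_filter] at hb ⊢
        refine ⟨ha', ?_⟩
        rw [pow_succ]
        refine Finset.mem_mul.2 ⟨a⁻¹ * b, hb.2, b⁻¹ * a', ?_, by group⟩
        rw [hkk]
        exact Finset.mul_mem_mul (Finset.inv_mem_inv hk) hk'
      have := Finset.card_lt_card this
      omega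

open scoped Classical in
/-- separation implies that few points of `P` are close to a connected set -/
lemma few_points {A P : Finset G} (hA : Conn K A) (hKne : K.Nonempty) (ρ : ℕ)
    (hP : P ⊆ A * K⁻¹)
    (hsep : ∀ p ∈ P, ∀ p' ∈ P,
      p⁻¹ * p' ∈ K * ((K⁻¹ * K) ^ ρ * (K⁻¹ * K) ^ ρ) * K⁻¹ → p = p') :
    P.card ≤ 1 ∨ P.card * (ρ + 1) ≤ A.card := by
  by_cases h1 : P.card ≤ 1
  · exact Or.inl h1
  right
  have hex : ∀ p ∈ P, ∃ a ∈ A, ∃ k ∈ K, p = a * k⁻¹ := by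
    intro p hp
    obtain ⟨a, ha, k, hk, rfl⟩ := Finset.mem_mul.1 (hP hp)
    exact ⟨a, ha, k⁻¹, by simpa using hk, by simp⟩
  choose! f hf k hk hfk using hex
  have hinv : ∀ u : G, u ∈ (K⁻¹ * K) ^ ρ → u⁻¹ ∈ (K⁻¹ * K) ^ ρ := by
    intro u hu
    have : ((K⁻¹ * K) ^ ρ)⁻¹ = (K⁻¹ * K) ^ ρ := by
      rw [← inv_pow, mul_inv_rev, inv_inv]
    rw [← this]
    exact Finset.inv_mem_inv hu
  have hdis : ∀ p ∈ P, ∀ p' ∈ P, ∀ b, (f p)⁻¹ * b ∈ (K⁻¹ * K) ^ ρ →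
      (f p')⁻¹ * b ∈ (K⁻¹ * K) ^ ρ → p = p' := by
    intro p hp p' hp' b hb hb'
    apply hsep p hp p' hp'
    refine Finset.mem_mul.2 ⟨k p * (((f p)⁻¹ * b) * ((f p')⁻¹ * b)⁻¹), ?_, (k p')⁻¹,
      Finset.inv_mem_inv (hk p' hp'), ?_⟩
    · exact Finset.mul_mem_mul (hk p hp) (Finset.mul_mem_mul hb (hinv _ hb'))
    · conv_rhs => rw [hfk p hp, hfk p' hp']
      group
  have hone : (1 : G) ∈ (K⁻¹ * K) ^ ρ := by
    apply Finset.one_mem_pow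
    obtain ⟨k, hk⟩ := hKne
    exact Finset.mem_mul.2 ⟨k⁻¹, Finset.inv_mem_inv hk, k, hk, by group⟩
  have hcard : ∀ p ∈ P, ρ + 1 ≤ (A.filter (fun b => (f p)⁻¹ * b ∈ (K⁻¹ * K) ^ ρ)).card := by
    intro p hp
    refine (conn_ball hA (hf p hp) hKne ρ).resolve_left (fun hE => ?_)
    obtain ⟨p', hp', hne⟩ := Finset.exists_mem_ne (by omega : 1 < P.card) p
    have := hf p' hp'
    rw [← hE, Finset.mem_filter] at this
    exact hne (hdis p hp p' hp' (f p') this.2 (by rwa [inv_mul_cancel])).symm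
  have hU : P.biUnion (fun p => A.filter (fun b => (f p)⁻¹ * b ∈ (K⁻¹ * K) ^ ρ)) ⊆ A := by
    intro b hb
    obtain ⟨p, _, hb⟩ := Finset.mem_biUnion.1 hb
    exact (Finset.mem_filter.1 hb).1
  have h2 := Finset.card_le_card hU
  rw [Finset.card_biUnion] at h2
  · refine le_trans ?_ h2
    rw [← smul_eq_mul]
    exact Finset.card_nsmul_le_sum _ _ _ hcard
  · intro p hp p' hp' hne
    change Disjoint _ _
    rw [Finset.disjoint_left]
    intro b hb hb'
    exact hne (hdis p hp p' hp' b (Finset.mem_filter.1 hb).2 (Finset.mem_filter.1 hb').2)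

/-- restriction of `S` to the single value `k` along `Γ * g`. -/
noncomputable def upd (S : G → Finset G) (Γ : Subgroup G) (g k : G) : G → Finset G :=
  open scoped Classical in fun a => if a * g⁻¹ ∈ Γ then {k} else S a

lemma good_step (hK : Good K S) (hKne : K.Nonempty) (g : G) (Γ : Subgroup G)
    (hΓ : ∀ γ ∈ Γ, ∀ a, S (γ * a) = S a) :
    ∃ k ∈ S g, ∃ B : Finset G, 1 ∉ B ∧ ∀ Γ' : Subgroup G, Γ' ≤ Γ → (∀ b ∈ B, b ∉ Γ') →
      Good K (upd S Γ' g k) := by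
  classical
  obtain ⟨c, hc, hcA⟩ := exists_sel hK
  obtain ⟨M, R, hM, hslack⟩ := hK.slack
  set ρ := max R (2 * M) with hρ
  refine ⟨c g, hc g, ((K * ((K⁻¹ * K) ^ ρ * (K⁻¹ * K) ^ ρ) * K⁻¹).image
    (fun u => g * u * g⁻¹)).erase 1, by simp, ?_⟩
  intro Γ' hΓ' hB
  have hsub : ∀ a, upd S Γ' g (c g) a ⊆ K := by
    intro a
    unfold upd
    split_ifs
    · simpa using hK.sub g (hc g)
    · exact hK.sub a
  have hfew : ∀ A, Conn K A → ((A * K⁻¹).filter (fun a => a * g⁻¹ ∈ Γ')).card ≤ 1 ∨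
      ((A * K⁻¹).filter (fun a => a * g⁻¹ ∈ Γ')).card * (ρ + 1) ≤ A.card := by
    intro A hA
    apply few_points hA hKne ρ (Finset.filter_subset _ _)
    intro p hp p' hp' hpp
    rw [Finset.mem_filter] at hp hp'
    by_contra hne
    refine hB (g * (p⁻¹ * p') * g⁻¹) (Finset.mem_erase.2 ⟨?_, Finset.mem_image_of_mem _ hpp⟩) ?_
    · intro h
      apply hne
      have : p⁻¹ * p' = 1 := by
        have := congrArg (fun t => g⁻¹ * t * g) h
        simpa [mul_assoc] using this
      exact (inv_mul_eq_one.1 this)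
    · have := Γ'.mul_mem (Γ'.inv_mem hp.2) hp'.2
      convert this using 1
      group
  refine ⟨hsub, ?_, ?_, ?_⟩
  · intro a
    unfold upd
    split_ifs
    · simp
    · exact hK.ne a
  · apply hall_of_conn hsub
    intro A hA
    have hbig : ρ ≤ A.card →
        2 * M * ((A * K⁻¹).filter (fun a => a * g⁻¹ ∈ Γ')).card ≤ A.card := by
      intro h
      rcases hfew A hA with h1 | h1
      · nlinarith [le_max_right R (2 * M)]
      · nlinarith [le_max_right R (2 * M)]
    by_cases hlt : ρ ≤ A.card
    · have h1 := hslack A hA (le_trans (le_max_left _ _) hlt)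
      have h2 := hbig hlt
      have h3 : nb K S A ⊆ nb K (upd S Γ' g (c g)) A ∪
          (A * K⁻¹).filter (fun a => a * g⁻¹ ∈ Γ') := by
        intro a ha
        by_cases hag : a * g⁻¹ ∈ Γ'
        · exact Finset.mem_union_right _ (Finset.mem_filter.2 ⟨(Finset.mem_filter.1 ha).1, hag⟩)
        · apply Finset.mem_union_left
          rw [mem_nb hsub]
          rw [mem_nb hK.sub] at ha
          simpa [upd, hag] using ha
      have h4 := (Finset.card_le_card h3).trans (Finset.card_union_le _ _)
      by_contra hcon
      push Not at hcon
      nlinarith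
    · have h1 : ((A * K⁻¹).filter (fun a => a * g⁻¹ ∈ Γ')).card ≤ 1 := by
        rcases hfew A hA with h1 | h1
        · exact h1
        · by_contra h2
          push Not at h2
          nlinarith
      obtain ⟨γ, hγ, hγu⟩ : ∃ γ ∈ Γ', ∀ a ∈ A * K⁻¹, a * g⁻¹ ∈ Γ' → a = γ * g := by
        by_cases hem : ∃ p ∈ A * K⁻¹, p * g⁻¹ ∈ Γ'
        · obtain ⟨p, hp, hpg⟩ := hem
          refine ⟨p * g⁻¹, hpg, fun a ha hag => ?_⟩
          rw [inv_mul_cancel_right]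
          exact Finset.card_le_one.1 h1 a (Finset.mem_filter.2 ⟨ha, hag⟩) p
            (Finset.mem_filter.2 ⟨hp, hpg⟩)
        · exact ⟨1, Γ'.one_mem, fun a ha hag => absurd ⟨a, ha, hag⟩ hem⟩
      have h2 := hcA (A.image (fun a => γ⁻¹ * a))
      rw [Finset.card_image_of_injective _ (mul_right_injective γ⁻¹)] at h2
      refine h2.trans ?_
      rw [← Finset.card_image_of_injective _ (mul_right_injective γ)]
      apply Finset.card_le_card
      intro a ha
      obtain ⟨b, hb, rfl⟩ := Finset.mem_image.1 ha
      rw [mem_nb (fun g => by simpa using hK.sub g (hc g))] at hb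
      obtain ⟨k, hk, hkA⟩ := hb
      rw [Finset.mem_singleton] at hk
      subst hk
      obtain ⟨a', ha', hae⟩ := Finset.mem_image.1 hkA
      have hbA : γ * b * c b ∈ A := by
        have : a' = γ * b * c b := by
          rw [mul_assoc, ← hae]; group
        rwa [← this]
      rw [mem_nb hsub]
      refine ⟨c b, ?_, hbA⟩
      unfold upd
      show c b ∈ if γ * b * g⁻¹ ∈ Γ' then _ else _
      split_ifs with hin
      · have hm : γ * b ∈ A * K⁻¹ := Finset.mem_mul.2 ⟨γ * b * c b, hbA, (c b)⁻¹,
          Finset.inv_mem_inv (hK.sub _ (hc b)), by group⟩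
        have := hγu _ hm hin
        rw [mul_left_cancel this]
        simp
      · rw [hΓ γ (hΓ' hγ)]
        exact hc b
  · refine ⟨2 * M, ρ, by omega, fun A hA hlt => ?_⟩
    have h1 := hslack A hA (le_trans (le_max_left _ _) hlt)
    have h2 : 2 * M * ((A * K⁻¹).filter (fun a => a * g⁻¹ ∈ Γ')).card ≤ A.card := by
      rcases hfew A hA with h1 | h1
      · nlinarith [le_max_right R (2 * M)]
      · nlinarith [le_max_right R (2 * M)]
    have h3 : nb K S A ⊆ nb K (upd S Γ' g (c g)) A ∪
        (A * K⁻¹).filter (fun a => a * g⁻¹ ∈ Γ') := by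
      intro a ha
      by_cases hag : a * g⁻¹ ∈ Γ'
      · exact Finset.mem_union_right _ (Finset.mem_filter.2 ⟨(Finset.mem_filter.1 ha).1, hag⟩)
      · apply Finset.mem_union_left
        rw [mem_nb hsub]
        rw [mem_nb hK.sub] at ha
        simpa [upd, hag] using ha
    have h4 := (Finset.card_le_card h3).trans (Finset.card_union_le _ _)
    nlinarith

lemma good_state_step (hKne : K.Nonempty) (P : Subgroup G → Prop)
    (hP : ∀ Γ, P Γ → ∀ B : Finset G, 1 ∉ B → ∃ Γ' ≤ Γ, P Γ' ∧ ∀ b ∈ B, b ∉ Γ')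
    (s : {p : (G → Finset G) × Subgroup G //
      Good K p.1 ∧ P p.2 ∧ ∀ γ ∈ p.2, ∀ a, p.1 (γ * a) = p.1 a}) (g : G) :
    ∃ s' : {p : (G → Finset G) × Subgroup G //
      Good K p.1 ∧ P p.2 ∧ ∀ γ ∈ p.2, ∀ a, p.1 (γ * a) = p.1 a},
      (∀ a, s'.1.1 a ⊆ s.1.1 a) ∧ ∃ k, ∀ γ ∈ s'.1.2, s'.1.1 (γ * g) = {k} := by
  obtain ⟨⟨S, Γ⟩, hg, hPΓ, hinv⟩ := s
  dsimp only at hg hPΓ hinv ⊢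
  obtain ⟨k, hk, B, hB, hstep⟩ := good_step hg hKne g Γ hinv
  obtain ⟨Γ', hle, hPΓ', hdis⟩ := hP Γ hPΓ B hB
  refine ⟨⟨(upd S Γ' g k, Γ'), hstep Γ' hle hdis, hPΓ', ?_⟩, ?_, k, ?_⟩
  · intro γ hγ a
    have : (γ * a * g⁻¹ ∈ Γ') ↔ a * g⁻¹ ∈ Γ' := by
      rw [mul_assoc]; exact Γ'.mul_mem_cancel_left hγ
    simp only [upd, this]
    by_cases h : a * g⁻¹ ∈ Γ'
    · rw [if_pos h, if_pos (this.2 h)]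
    · rw [if_neg h, if_neg (fun h' => h (this.1 h')), hinv γ (hle hγ)]
  · intro a
    simp only [upd]
    split_ifs with h
    · have : S a = S g := by
        have := hinv _ (hle h) g
        rwa [inv_mul_cancel_right] at this
      rw [this]
      simpa using hk
    · exact Finset.Subset.refl _
  · intro γ hγ
    simp [upd, hγ]

open scoped Classical in
lemma exists_toeplitz [Countable G] (hKne : K.Nonempty)
    (hK3 : ∀ A : Finset G, 3 * A.card ≤ (A * K⁻¹).card) (P : Subgroup G → Prop) (hT : P ⊤)
    (hP : ∀ Γ, P Γ → ∀ B : Finset G, 1 ∉ B → ∃ Γ' ≤ Γ, P Γ' ∧ ∀ b ∈ B, b ∉ Γ') :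
    ∃ x : G → G, (∀ g, x g ∈ K) ∧ (∀ g, ∃ Γ, P Γ ∧ ∀ γ ∈ Γ, x (γ * g) = x g) ∧
      ∀ h, 2 ≤ (K.filter (fun k => x (h * k⁻¹) = k)).card := by
  choose st hst1 hst2 using good_state_step hKne P hP
  obtain ⟨e, he⟩ := exists_surjective_nat G
  have hnb0 : ∀ A, nb K (fun _ => K) A = A * K⁻¹ := by
    intro A
    unfold nb
    apply Finset.filter_true_of_mem
    intro g hg
    obtain ⟨a, ha, k, hk, rfl⟩ := Finset.mem_mul.1 hg
    exact ⟨k⁻¹, by simpa using hk, by simpa using ha⟩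
  have h0 : Good K (fun _ => K) := by
    refine ⟨fun _ => Finset.Subset.refl _, fun _ => hKne, fun A => ?_, 1, 0, one_pos, fun A _ _ => ?_⟩
    · rw [hnb0]; have := hK3 A; omega
    · rw [hnb0]; have := hK3 A; omega
  let s : ℕ → {p : (G → Finset G) × Subgroup G //
      Good K p.1 ∧ P p.2 ∧ ∀ γ ∈ p.2, ∀ a, p.1 (γ * a) = p.1 a} := fun n =>
    Nat.rec ⟨(fun _ => K, ⊤), h0, hT, fun _ _ _ => rfl⟩ (fun n t => st t (e n)) n
  have hs : ∀ n, s (n + 1) = st (s n) (e n) := fun n => rfl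
  have hanti : ∀ a, Antitone (fun n => (s n).1.1 a) := by
    intro a
    apply antitone_nat_of_succ_le
    intro n
    show (s (n + 1)).1.1 a ⊆ (s n).1.1 a
    rw [hs]
    exact hst1 _ _ a
  have hfix : ∀ n, ∃ k, ∀ γ ∈ (s (n + 1)).1.2, ∀ m, n + 1 ≤ m → (s m).1.1 (γ * e n) = {k} := by
    intro n
    obtain ⟨k, hk⟩ := hst2 (s n) (e n)
    refine ⟨k, fun γ hγ m hm => ?_⟩
    have h1 := hanti (γ * e n) hm
    have h2 := hk γ (by rw [← hs]; exact hγ)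
    rw [← hs] at h2
    have h1' : (s m).1.1 (γ * e n) ⊆ {k} := by rw [← h2]; exact h1
    exact ((s m).2.1.ne _).subset_singleton_iff.1 h1'
  choose j hj using he
  choose kk hkk using hfix
  have hval : ∀ a m, j a + 1 ≤ m → (s m).1.1 a = {kk (j a)} := by
    intro a m hm
    have := hkk (j a) 1 (Subgroup.one_mem _) m hm
    rwa [one_mul, hj] at this
  refine ⟨fun a => kk (j a), ?_, ?_, ?_⟩
  · intro g
    have h1 := hval g _ le_rfl
    apply (s (j g + 1)).2.1.sub g
    rw [h1]; simp
  · intro g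
    refine ⟨(s (j g + 1)).1.2, (s (j g + 1)).2.2.1, fun γ hγ => ?_⟩
    have h1 := hkk (j g) γ hγ (max (j g + 1) (j (γ * g) + 1)) (le_max_left _ _)
    rw [hj, hval (γ * g) _ (le_max_right _ _)] at h1
    simpa using h1
  · intro h
    set m := (K.sup (fun k => j (h * k⁻¹) + 1)) with hm
    have hmk : ∀ k ∈ K, (s m).1.1 (h * k⁻¹) = {kk (j (h * k⁻¹))} := fun k hk =>
      hval _ _ (Finset.le_sup (f := fun k => j (h * k⁻¹) + 1) hk)
    have h1 := (s m).2.1.hall {h}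
    rw [Finset.card_singleton, mul_one] at h1
    refine h1.trans ?_
    rw [← Finset.card_image_of_injective (K.filter _) (f := fun k => h * k⁻¹)
      (fun a b hab => by simpa using hab)]
    apply Finset.card_le_card
    intro g hg
    rw [mem_nb (s m).2.1.sub] at hg
    obtain ⟨k, hk, hgk⟩ := hg
    rw [Finset.mem_singleton] at hgk
    have hkK := (s m).2.1.sub _ hk
    have hge : g = h * k⁻¹ := by rw [← hgk]; group
    rw [hge, hmk k hkK, Finset.mem_singleton] at hk
    exact Finset.mem_image.2 ⟨k, Finset.mem_filter.2 ⟨hkK, hk.symm⟩, hge.symm⟩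

end
end Toep
namespace Toep
open scoped Pointwise
open Filter Topology BoundedContinuousFunction

section
variable {G : Type*} [Group G]

open scoped Classical in
lemma folner (h : ∀ K : Finset G, K.Nonempty → ∃ A : Finset G, (A * K⁻¹).card < 3 * A.card)
    (K : Finset G) (n : ℕ) : ∃ F : Finset G, F.Nonempty ∧
      ∀ g ∈ K, (n + 1) * ((g • F) \ F).card ≤ F.card := by
  by_contra hcon
  push Not at hcon
  have h1 : ∀ F : Finset G, (n + 2) * F.card ≤ (n + 1) * (insert 1 K * F).card := by
    intro F
    rcases F.eq_empty_or_nonempty with rfl | hF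
    · simp
    obtain ⟨g, hg, hgF⟩ := hcon F hF
    have h2 : F ∪ ((g • F) \ F) ⊆ insert 1 K * F := by
      intro a ha
      rcases Finset.mem_union.1 ha with ha | ha
      · exact Finset.mem_mul.2 ⟨1, Finset.mem_insert_self _ _, a, ha, one_mul a⟩
      · obtain ⟨b, hb, rfl⟩ := Finset.mem_smul_finset.1 (Finset.mem_sdiff.1 ha).1
        exact Finset.mem_mul.2 ⟨g, Finset.mem_insert_of_mem hg, b, hb, rfl⟩
    have h3 := Finset.card_le_card h2
    rw [Finset.card_union_of_disjoint Finset.disjoint_sdiff] at h3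
    nlinarith
  have h2 : ∀ j (F : Finset G), (n + 2) ^ j * F.card ≤ (n + 1) ^ j * ((insert 1 K) ^ j * F).card := by
    intro j F
    induction j with
    | zero => simp
    | succ j ih =>
      have := h1 ((insert 1 K) ^ j * F)
      rw [← mul_assoc, ← pow_succ'] at this
      calc (n + 2) ^ (j + 1) * F.card = (n + 2) * ((n + 2) ^ j * F.card) := by ring
        _ ≤ (n + 2) * ((n + 1) ^ j * ((insert 1 K) ^ j * F).card) := by gcongr
        _ = (n + 1) ^ j * ((n + 2) * ((insert 1 K) ^ j * F).card) := by ring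
        _ ≤ (n + 1) ^ j * ((n + 1) * ((insert 1 K) ^ (j + 1) * F).card) := by gcongr
        _ = _ := by ring
  have h3 : 3 * (n + 1) ^ (2 * (n + 1)) ≤ (n + 2) ^ (2 * (n + 1)) := by
    have hb := one_add_mul_le_pow (a := (1 / (n + 1) : ℝ))
      (by have : (0:ℝ) ≤ 1 / (n + 1) := by positivity
          linarith) (2 * (n + 1))
    have hpos : (0:ℝ) < n + 1 := by positivity
    have he : (1 + 1 / (n + 1) : ℝ) = (n + 2) / (n + 1) := by field_simp; ring
    have he2 : (1 + ((2 * (n + 1) : ℕ) : ℝ) * (1 / (n + 1)) : ℝ) = 3 := by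
      push_cast; field_simp; ring
    rw [he2, he, div_pow, le_div_iff₀ (by positivity)] at hb
    exact_mod_cast hb
  obtain ⟨A, hA⟩ := h ((insert 1 K) ^ (2 * (n + 1))) ((Finset.insert_nonempty _ _).pow)
  have h4 := h2 (2 * (n + 1)) A⁻¹
  rw [← Finset.card_inv (A * _), mul_inv_rev, inv_inv] at hA
  rw [Finset.card_inv] at h4
  have h5 : 0 < (n + 1) ^ (2 * (n + 1)) := by positivity
  nlinarith

open scoped Classical in
lemma inv_measure (h : ∀ K : Finset G, K.Nonempty → ∃ A : Finset G, (A * K⁻¹).card < 3 * A.card) :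
    HasInvariantMeasuresAll G := by
  intro X _ _ _ _ _ act hact h1 hmul
  obtain ⟨x0⟩ := ‹Nonempty X›
  choose F hF hFK using folner h
  let m : Finset G × ℕ → Measure X := fun i =>
    ((F i.1 i.2).card : ENNReal)⁻¹ • ∑ a ∈ F i.1 i.2, Measure.dirac (act a x0)
  have hm : ∀ i, IsProbabilityMeasure (m i) := by
    intro i
    constructor
    simp only [m, Measure.smul_apply, Measure.coe_finsetSum, Finset.sum_apply, measure_univ,
      Finset.sum_const, smul_eq_mul, nsmul_eq_mul, mul_one]
    exact ENNReal.inv_mul_cancel (by simpa using (hF i.1 i.2).ne_empty) (ENNReal.natCast_ne_top _)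
  let μ : Finset G × ℕ → ProbabilityMeasure X := fun i => ⟨m i, hm i⟩
  have hintg : ∀ i (f : X →ᵇ ℝ), ∫ x, f x ∂(μ i : Measure X) =
      ((F i.1 i.2).card : ℝ)⁻¹ * ∑ a ∈ F i.1 i.2, f (act a x0) := by
    intro i f
    show ∫ x, f x ∂(m i) = _
    simp only [m]
    rw [integral_smul_measure, integral_finsetSum_measure]
    · simp [integral_dirac]
    · intro a _
      exact f.integrable _
  let U := Ultrafilter.of (atTop : Filter (Finset G × ℕ))
  have hU : (U : Filter (Finset G × ℕ)) ≤ atTop := Ultrafilter.of_le _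
  obtain ⟨ν, -, hν⟩ := isCompact_univ.ultrafilter_le_nhds (U.map μ) (by simp)
  have hν' : Tendsto μ U (𝓝 ν) := hν
  rw [ProbabilityMeasure.tendsto_iff_forall_integral_tendsto] at hν'
  refine ⟨ν, inferInstance, fun g => ?_⟩
  have : IsProbabilityMeasure (Measure.map (act g) (ν : Measure X)) :=
    Measure.isProbabilityMeasure_map (hact g).measurable.aemeasurable
  apply ext_of_forall_integral_eq_of_IsFiniteMeasure
  intro f
  rw [integral_map (hact g).measurable.aemeasurable f.continuous.aestronglyMeasurable]
  let f' : X →ᵇ ℝ := f.compContinuous ⟨act g, hact g⟩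
  have t1 := hν' f
  have t2 := hν' f'
  have t3 : Tendsto (fun i : Finset G × ℕ => 2 * ‖f‖ / ((i.2 : ℝ) + 1)) U (𝓝 0) := by
    have : Tendsto (fun i : Finset G × ℕ => ((i.2 : ℝ) + 1)) atTop atTop := by
      apply tendsto_atTop_add_const_right
      apply tendsto_natCast_atTop_atTop.comp
      rw [← prod_atTop_atTop_eq]
      exact tendsto_snd
    exact (this.const_div_atTop _).mono_left hU
  have hev : ∀ᶠ i in (U : Filter (Finset G × ℕ)), ‖∫ x, f' x ∂(μ i : Measure X) -
      ∫ x, f x ∂(μ i : Measure X)‖ ≤ 2 * ‖f‖ / ((i.2 : ℝ) + 1) := by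
    apply hU
    filter_upwards [eventually_ge_atTop (({g} : Finset G), 0)] with i hi
    have hg : g ∈ i.1 := hi.1 (by simp)
    rw [hintg, hintg]
    have hK := hFK i.1 i.2 g hg
    set E := F i.1 i.2 with hE
    have hEpos : (0:ℝ) < E.card := by exact_mod_cast (hF i.1 i.2).card_pos
    have e1 : ∑ a ∈ E, f' (act a x0) = ∑ b ∈ g • E, f (act b x0) := by
      have : g • E = E.image (fun a => g * a) := rfl
      rw [this, Finset.sum_image (fun a _ b _ hab => mul_left_cancel hab)]
      apply Finset.sum_congr rfl
      intro a _
      simp [f', hmul]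
    rw [e1, ← mul_sub, ← Finset.sum_sdiff_sub_sum_sdiff]
    have hb : ∀ T : Finset G, ‖∑ b ∈ T, f (act b x0)‖ ≤ T.card * ‖f‖ := by
      intro T
      refine (norm_sum_le_of_le _ (fun b _ => f.norm_coe_le_norm _)).trans ?_
      simp
    have hc : (E \ (g • E)).card = ((g • E) \ E).card :=
      Finset.card_sdiff_comm (Finset.card_smul_finset _ _).symm
    have hK' : ((i.2 : ℝ) + 1) * ((g • E) \ E).card ≤ E.card := by exact_mod_cast hK
    have hn := (norm_sub_le _ _).trans (add_le_add (hb ((g • E) \ E)) (hb (E \ (g • E))))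
    rw [hc] at hn
    rw [norm_mul, norm_inv, RCLike.norm_natCast, inv_mul_eq_div, div_le_div_iff₀ hEpos (by positivity)]
    calc _ ≤ (((g • E) \ E).card * ‖f‖ + ((g • E) \ E).card * ‖f‖) * ((i.2 : ℝ) + 1) := by gcongr
      _ = 2 * ‖f‖ * (((i.2 : ℝ) + 1) * ((g • E) \ E).card) := by ring
      _ ≤ _ := by gcongr
  have t4 := squeeze_zero_norm' hev t3
  have t5 := tendsto_nhds_unique (t2.sub t1) t4
  exact sub_eq_zero.1 t5

open scoped Classical in
lemma exists_expanding (hNA : ¬ HasInvariantMeasuresAll G) :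
    ∃ K : Finset G, K.Nonempty ∧ ∀ A : Finset G, 3 * A.card ≤ (A * K⁻¹).card := by
  by_contra hcon
  push Not at hcon
  exact hNA (inv_measure hcon)

end
end Toep
namespace Toep
open Filter Topology

section
variable {G Z : Type*} [Group G] [MetricSpace Z] [CompactSpace Z] [MulAction G Z]

lemma lc (hequi : Equicontinuous fun g : G => fun z : Z => g • z) {C : Set Z} (hC : IsClopen C) :
    IsLocallyConstant (fun z : Z => {h : G | h • z ∈ C}) := by
  rw [IsLocallyConstant.iff_eventually_eq]
  intro z
  obtain ⟨δ, hδ, hb⟩ := lebesgue_number_lemma_of_metric (s := (Set.univ : Set Z))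
    (c := fun b : Bool => if b then C else Cᶜ) isCompact_univ
    (by intro b; cases b <;> simp [hC.1, hC.2]) (by
      intro a _
      rw [Set.mem_iUnion]
      by_cases ha : a ∈ C
      · exact ⟨true, by simpa using ha⟩
      · exact ⟨false, by simpa using ha⟩)
  have he := Metric.equicontinuousAt_iff.1 (hequi z) δ hδ
  obtain ⟨η, hη, he⟩ := he
  filter_upwards [Metric.ball_mem_nhds z hη] with z' hz'
  ext h
  have h1 := he z' hz' h
  obtain ⟨b, hb⟩ := hb (h • z) trivial
  have h2 := hb (Metric.mem_ball_self hδ)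
  have h3 := hb (show h • z' ∈ Metric.ball (h • z) δ by rw [Metric.mem_ball, dist_comm]; exact h1)
  cases b
  · simp at h2 h3
    simp [h2, h3]
  · simp at h2 h3
    simp [h2, h3]

lemma blockSub [TotallyDisconnectedSpace Z]
    (hequi : Equicontinuous fun g : G => fun z : Z => g • z) (z : Z) {O : Set Z} (hO : O ∈ 𝓝 z) :
    ∃ Γ : Subgroup G, Γ.FiniteIndex ∧ (∀ γ ∈ Γ, γ • z ∈ O) ∧
      ∃ O' ∈ 𝓝 z, ∀ g : G, g • z ∈ O' → g ∈ Γ := by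
  obtain ⟨O1, hO1, hhOopen, hzO1⟩ := mem_nhds_iff.1 hO
  obtain ⟨C, hC, hzC, hCO⟩ := compact_exists_isClopen_in_isOpen hhOopen hzO1
  have hlc := lc (G := G) hequi hC
  let φ : Z → Set G := fun z => {h : G | h • z ∈ C}
  have hφ : ∀ (g : G) (w : Z) (h : G), h ∈ φ (g • w) ↔ h * g ∈ φ w := by
    intro g w h
    simp [φ, mul_smul]
  have hφ2 : ∀ (g : G) (w w' : Z), φ w = φ w' → φ (g • w) = φ (g • w') := by
    intro g w w' hw
    ext h
    rw [hφ, hφ, hw]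
  let Γ : Subgroup G :=
    { carrier := {g | φ (g • z) = φ z}
      mul_mem' := by
        intro a b ha hb
        show φ ((a * b) • z) = φ z
        rw [mul_smul, hφ2 a _ _ hb]
        exact ha
      one_mem' := by simp
      inv_mem' := by
        intro a ha
        have := hφ2 a⁻¹ _ _ ha
        rw [inv_smul_smul] at this
        exact this.symm }
  have hΓ : ∀ g, g ∈ Γ ↔ φ (g • z) = φ z := fun g => Iff.rfl
  refine ⟨Γ, ?_, ?_, ?_⟩
  · rw [Subgroup.finiteIndex_iff_finite_quotient]
    have hfin : Finite (Set.range φ) := hlc.range_finite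
    refine Finite.of_injective
      (fun q : G ⧸ Γ => (⟨φ (q.out • z), Set.mem_range_self _⟩ : Set.range φ)) ?_
    intro q q' hqq
    have h1 : φ (q.out • z) = φ (q'.out • z) := congrArg Subtype.val hqq
    rw [← q.out_eq', ← q'.out_eq']
    refine QuotientGroup.eq.2 ?_
    rw [hΓ, mul_smul, ← hφ2 _ _ _ h1, inv_smul_smul]
  · intro γ hγ
    rw [hΓ] at hγ
    have : (1 : G) ∈ φ (γ • z) := by rw [hγ]; simpa [φ] using hzC
    exact hO1 (hCO (by simpa [φ] using this))
  · exact ⟨_, (IsLocallyConstant.iff_eventually_eq _).1 hlc z, fun g hg => hg⟩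

/-- the closure of a finite index sub-orbit is a neighbourhood -/
lemma closure_sub (hcZ : ∀ g : G, Continuous fun z : Z => g • z)
    (hminZ : ∀ z : Z, Dense (MulAction.orbit G z)) (z : Z) (Γ : Subgroup G) [Γ.FiniteIndex] :
    closure {w : Z | ∃ γ ∈ Γ, w = γ • z} ∈ 𝓝 z := by
  have : Nonempty Z := ⟨z⟩
  set S : Set Z := {w : Z | ∃ γ ∈ Γ, w = γ • z} with hS
  have hfin : Finite (G ⧸ Γ) := inferInstance
  let f : G ⧸ Γ → Set Z := fun q => closure ((fun w => q.out • w) '' S)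
  have hU : ⋃ q, f q = Set.univ := by
    rw [← closure_iUnion_of_finite, ← dense_iff_closure_eq]
    refine (hminZ z).mono ?_
    rintro _ ⟨g, rfl⟩
    rw [Set.mem_iUnion]
    refine ⟨(g : G ⧸ Γ), ((g : G ⧸ Γ).out⁻¹ * g) • z, ⟨_, ?_, rfl⟩, by simp [smul_smul]⟩
    rw [← QuotientGroup.eq]
    exact Quotient.out_eq' _
  obtain ⟨q, p, hp⟩ := nonempty_interior_of_iUnion_of_closed (fun q => isClosed_closure) hU
  have h1 : ∀ w, q.out • w ∈ f q → w ∈ closure S := by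
    intro w hw
    have := map_mem_closure (hcZ q.out⁻¹) hw (t := S) (by
      rintro _ ⟨s, hs, rfl⟩
      simpa using hs)
    simpa using this
  have h2 : {w | q.out • w ∈ interior (f q)} ⊆ interior (closure S) :=
    interior_maximal (fun w hw => h1 w (interior_subset hw))
      (isOpen_interior.preimage (hcZ q.out))
  have h3 : q.out⁻¹ • p ∈ interior (closure S) := h2 (by simpa using hp)
  obtain ⟨w, hw, γ, hγ, rfl⟩ := mem_closure_iff.1 (interior_subset h3) _ isOpen_interior h3
  have h4 : (fun v : Z => γ • v) ⁻¹' interior (closure S) ∈ 𝓝 z :=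
    (isOpen_interior.preimage (hcZ γ)).mem_nhds hw
  filter_upwards [h4] with v hv
  have := map_mem_closure (hcZ γ⁻¹) (interior_subset hv) (t := S) (by
    rintro _ ⟨s, hs, rfl⟩
    exact ⟨γ⁻¹ * s, Γ.mul_mem (Γ.inv_mem hγ) hs, by rw [mul_smul]⟩)
  simpa using this

lemma exists_not_orbit [Countable G] (hperfZ : ∀ z : Z, ¬ IsOpen ({z} : Set Z)) (z0 : Z) :
    ∃ z1 : Z, ∀ g : G, g • z0 ≠ z1 := by
  by_contra hcon
  push Not at hcon
  have : Nonempty Z := ⟨z0⟩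
  obtain ⟨g, hg⟩ := nonempty_interior_of_iUnion_of_closed (f := fun g : G => ({g • z0} : Set Z))
    (fun g => isClosed_singleton) (by
      ext z
      obtain ⟨g, hg⟩ := hcon z
      simp only [Set.mem_iUnion, Set.mem_univ, iff_true]
      exact ⟨g, hg.symm⟩)
  apply hperfZ (g • z0)
  have : interior ({g • z0} : Set Z) = {g • z0} :=
    hg.subset_singleton_iff.1 interior_subset
  rw [← this]
  exact isOpen_interior

lemma exists_col [TotallyDisconnectedSpace Z] (hperfZ : ∀ z : Z, ¬ IsOpen ({z} : Set Z)) (z1 : Z) :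
    ∃ ψ : Z → Bool, (∀ z, z ≠ z1 → ∀ᶠ z' in 𝓝 z, ψ z' = ψ z) ∧
      ∀ O ∈ 𝓝 z1, ∀ b, ∃ v ∈ O, v ≠ z1 ∧ ψ v = b := by
  classical
  have hstep : ∀ (C : {C : Set Z // IsClopen C ∧ z1 ∈ C}) (n : ℕ),
      ∃ C' : {C : Set Z // IsClopen C ∧ z1 ∈ C}, C'.1 ⊆ C.1 ∧
        C'.1 ⊆ Metric.ball z1 (1 / ((n : ℝ) + 1)) ∧ ∃ v ∈ C.1, v ∉ C'.1 := by
    intro C n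
    obtain ⟨v, hv, hvz⟩ : ∃ v ∈ C.1, v ≠ z1 := by
      by_contra hcon
      push Not at hcon
      apply hperfZ z1
      have : C.1 = {z1} := Set.eq_singleton_iff_unique_mem.2 ⟨C.2.2, hcon⟩
      rw [← this]
      exact C.2.1.2
    obtain ⟨C', hC', hz, hsub⟩ := compact_exists_isClopen_in_isOpen
      (U := (C.1 ∩ Metric.ball z1 (1 / ((n : ℝ) + 1))) ∩ {v}ᶜ) (x := z1)
      ((C.2.1.2.inter Metric.isOpen_ball).inter isOpen_compl_singleton)
      ⟨⟨C.2.2, Metric.mem_ball_self (by positivity)⟩, by simpa using hvz.symm⟩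
    exact ⟨⟨C', hC', hz⟩, fun w hw => (hsub hw).1.1, fun w hw => (hsub hw).1.2, v, hv,
      fun h => (hsub h).2 rfl⟩
  choose st h1 h2 h3 using hstep
  let C : ℕ → {C : Set Z // IsClopen C ∧ z1 ∈ C} := fun n =>
    Nat.rec ⟨Set.univ, isClopen_univ, trivial⟩ (fun n t => st t n) n
  have hC : ∀ n, C (n + 1) = st (C n) n := fun n => rfl
  have hanti : Antitone (fun n => (C n).1) := antitone_nat_of_succ_le (fun n => by
    show (C (n + 1)).1 ⊆ (C n).1
    rw [hC]; exact h1 _ _)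
  have hball : ∀ n, (C (n + 1)).1 ⊆ Metric.ball z1 (1 / ((n : ℝ) + 1)) := by
    intro n; rw [hC]; exact h2 _ _
  have hout : ∀ z, z ≠ z1 → ∃ n, z ∉ (C n).1 := by
    intro z hz
    obtain ⟨n, hn⟩ := exists_nat_one_div_lt (dist_pos.2 hz)
    exact ⟨n + 1, fun h => absurd (hball n h) (by rw [Metric.mem_ball]; linarith)⟩
  let ψ : Z → Bool := fun z => if h : ∃ n, z ∉ (C n).1 then decide (Even (Nat.find h)) else true
  have hval : ∀ n z, z ∈ (C n).1 → z ∉ (C (n + 1)).1 → ψ z = decide (Even (n + 1)) := by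
    intro n z hz hz'
    have hex : ∃ n, z ∉ (C n).1 := ⟨n + 1, hz'⟩
    have hf : Nat.find hex = n + 1 := by
      rw [Nat.find_eq_iff]
      exact ⟨hz', fun k hk => not_not.2 (hanti (Nat.le_of_lt_succ hk) hz)⟩
    simp only [ψ, dif_pos hex, hf]
  refine ⟨ψ, ?_, ?_⟩
  · intro z hz
    obtain ⟨n, hn, hn'⟩ : ∃ n, z ∈ (C n).1 ∧ z ∉ (C (n + 1)).1 := by
      have hex := hout z hz
      have hpos : Nat.find hex ≠ 0 := by
        intro h0
        have := Nat.find_spec hex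
        rw [h0] at this
        exact this trivial
      obtain ⟨k, hk⟩ := Nat.exists_eq_succ_of_ne_zero hpos
      refine ⟨k, not_not.1 (Nat.find_min hex (by omega)), ?_⟩
      have := Nat.find_spec hex
      rwa [hk] at this
    filter_upwards [(C n).2.1.2.mem_nhds hn, (C (n + 1)).2.1.1.isOpen_compl.mem_nhds hn'] with
      z' hz1 hz2
    rw [hval n z' hz1 hz2, hval n z hn hn']
  · intro O hO b
    obtain ⟨ε, hε, hb⟩ := Metric.mem_nhds_iff.1 hO
    obtain ⟨n, hn⟩ := exists_nat_one_div_lt hε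
    obtain ⟨j, hj, hjb⟩ : ∃ j, n + 1 ≤ j ∧ decide (Even (j + 1)) = b := by
      cases b
      · exact ⟨2 * (n + 1), by omega, by simp [Nat.even_add_one]⟩
      · exact ⟨2 * (n + 1) + 1, by omega, by simp [Nat.even_add_one]⟩
    obtain ⟨v, hv, hv'⟩ := h3 (C j) j
    rw [← hC] at hv'
    refine ⟨v, hb ?_, ?_, ?_⟩
    · have := hball n (hanti hj hv)
      exact Metric.ball_subset_ball hn.le this
    · rintro rfl
      exact hv' (C (j + 1)).2.2
    · rw [hval j v hv hv', hjb]

end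
end Toep
namespace Toep
open Filter Topology

section
variable {G Z A : Type*} [Group G] [MetricSpace Z] [CompactSpace Z] [MulAction G Z]
  [TopologicalSpace A] [DiscreteTopology A]

/-- the joint orbit closure of `(x, z0)` -/
def Rel (x : G → A) (z0 : Z) : Set ((G → A) × Z) :=
  closure (Set.range (fun h : G => (shiftAct h x, h • z0)))

lemma shift_mul (g h : G) (y : G → A) : shiftAct (g * h) y = shiftAct g (shiftAct h y) := by
  funext a
  simp [shiftAct, mul_assoc]

lemma shift_one (y : G → A) : shiftAct (1 : G) y = y := by
  funext a
  simp [shiftAct]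

lemma continuous_shift (g : G) : Continuous (shiftAct g : (G → A) → (G → A)) :=
  continuous_pi fun h => continuous_apply (g⁻¹ * h)

lemma ev_coord (y : G → A) (g : G) : ∀ᶠ y' in 𝓝 y, y' g = y g :=
  ((isOpen_discrete {y g}).preimage
    (continuous_apply g : Continuous fun y' : G → A => y' g)).mem_nhds rfl

lemma ev_pull {X Y : Type*} [TopologicalSpace X] [TopologicalSpace Y] {f : X → Y}
    (hf : Continuous f) (a : X) {b : Y} (hb : f a = b) {P : Y → Prop} (h : ∀ᶠ b in 𝓝 b, P b) :
    ∀ᶠ a' in 𝓝 a, P (f a') := by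
  subst hb
  exact hf.continuousAt.eventually h

lemma rel_shift (hcZ : ∀ g : G, Continuous fun z : Z => g • z) {x : G → A} {z0 : Z} (g : G)
    {y : G → A} {z : Z} (h : (y, z) ∈ Rel x z0) : (shiftAct g y, g • z) ∈ Rel x z0 := by
  have hc : Continuous (fun p : (G → A) × Z => (shiftAct g p.1, g • p.2)) :=
    ((continuous_shift g).comp continuous_fst).prodMk ((hcZ g).comp continuous_snd)
  have := map_mem_closure (t := Set.range (fun h : G => (shiftAct h x, h • z0))) hc h (by
    rintro _ ⟨k, rfl⟩
    exact ⟨g * k, by simp [shift_mul, mul_smul]⟩)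
  exact this

lemma rel_sep [TotallyDisconnectedSpace Z] (hcZ : ∀ g : G, Continuous fun z : Z => g • z)
    (hminZ : ∀ z : Z, Dense (MulAction.orbit G z))
    (hequi : Equicontinuous fun g : G => fun z : Z => g • z) {x : G → A} {z0 z1 : Z}
    (ψ : Z → Bool) (hψ : ∀ z, z ≠ z1 → ∀ᶠ z' in 𝓝 z, ψ z' = ψ z)
    (hψ1 : ∀ O ∈ 𝓝 z1, ∀ b, ∃ v ∈ O, v ≠ z1 ∧ ψ v = b)
    (col : A → Bool) (hcol : ∀ g, col (x g) = ψ (g⁻¹ • z0))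
    {y : G → A} {z z' : Z} (h1 : (y, z) ∈ Rel x z0) (h2 : (y, z') ∈ Rel x z0) : z = z' := by
  have key : ∀ {z : Z}, (y, z) ∈ Rel x z0 → ∀ g : G, g • z ≠ z1 → col (y g⁻¹) = ψ (g • z) := by
    intro z hz g hg
    have e1 : ∀ᶠ p : (G → A) × Z in 𝓝 (y, z), p.1 g⁻¹ = y g⁻¹ :=
      by have := ev_pull (f := fun p : (G → A) × Z => p.1) (continuous_fst) (y, z) rfl (ev_coord y g⁻¹)
         exact this
    have e2 : ∀ᶠ p : (G → A) × Z in 𝓝 (y, z), ψ (g • p.2) = ψ (g • z) :=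
      by have := ev_pull (f := fun p : (G → A) × Z => g • p.2) ((hcZ g).comp continuous_snd) (y, z) rfl (hψ _ hg)
         exact this
    obtain ⟨_, ⟨ha, hb⟩, h, rfl⟩ := mem_closure_iff_nhds.1 hz _ (e1.and e2)
    simp only at ha hb
    rw [← ha, ← hb]
    simp [shiftAct, hcol, mul_smul]
  by_contra hne
  obtain ⟨z2, hz2⟩ : ∃ z2, (z1, z2) ∈ closure (Set.range (fun g : G => (g • z, g • z'))) := by
    have hc : IsClosed (Prod.fst '' closure (Set.range (fun g : G => (g • z, g • z')))) :=
      (isClosed_closure.isCompact.image continuous_fst).isClosed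
    have : z1 ∈ Prod.fst '' closure (Set.range (fun g : G => (g • z, g • z'))) := by
      have hsub : MulAction.orbit G z ⊆
          Prod.fst '' closure (Set.range (fun g : G => (g • z, g • z'))) := by
        rintro _ ⟨g, rfl⟩
        exact ⟨(g • z, g • z'), subset_closure ⟨g, rfl⟩, rfl⟩
      exact closure_minimal hsub hc (hminZ z z1)
    obtain ⟨⟨_, z2⟩, h, rfl⟩ := this
    exact ⟨z2, h⟩
  have hue := CompactSpace.uniformEquicontinuous_of_equicontinuous hequi
  have hz21 : z2 ≠ z1 := by
    rintro rfl
    obtain ⟨δ, hδ, hd⟩ := Metric.uniformEquicontinuous_iff.1 hue _ (dist_pos.2 hne)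
    have : {p : Z × Z | dist p.1 p.2 < δ} ∈ 𝓝 (z2, z2) :=
      (isOpen_lt continuous_dist continuous_const).mem_nhds (by simpa using hδ)
    obtain ⟨_, hp, g, rfl⟩ := mem_closure_iff_nhds.1 hz2 _ this
    have := hd _ _ hp g⁻¹
    simp at this
  have hO : {u : Z | (∀ᶠ u' in 𝓝 u, ψ u' = ψ z2) ∧ u ≠ z1} ∈ 𝓝 z2 :=
    (eventually_eventually_nhds.2 (hψ z2 hz21)).and (isOpen_ne.mem_nhds hz21)
  obtain ⟨Γ, hΓf, hΓ, -⟩ := blockSub (G := G) hequi z2 hO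
  obtain ⟨v, hv, hvz, hvb⟩ := hψ1 _ (interior_mem_nhds.2 (closure_sub hcZ hminZ z1 Γ)) (!ψ z2)
  have hv' : {u | ((∀ᶠ u' in 𝓝 u, ψ u' = ψ v) ∧ u ≠ z1)} ∈ 𝓝 v :=
    (eventually_eventually_nhds.2 (hψ v hvz)).and (isOpen_ne.mem_nhds hvz)
  obtain ⟨_, ⟨hu1, hu2⟩, γ, hγ, rfl⟩ := mem_closure_iff_nhds.1 (interior_subset hv) _ hv'
  obtain ⟨hw1, hw2⟩ := hΓ γ hγ
  have e1 : ∀ᶠ p : Z × Z in 𝓝 (z1, z2), ψ (γ • p.1) = ψ v ∧ γ • p.1 ≠ z1 :=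
    by have := ev_pull (f := fun p : Z × Z => γ • p.1) ((hcZ γ).comp continuous_fst) (z1, z2) rfl (hu1.and (isOpen_ne.mem_nhds hu2))
       exact this
  have e2 : ∀ᶠ p : Z × Z in 𝓝 (z1, z2), ψ (γ • p.2) = ψ z2 ∧ γ • p.2 ≠ z1 :=
    by have := ev_pull (f := fun p : Z × Z => γ • p.2) ((hcZ γ).comp continuous_snd) (z1, z2) rfl (hw1.and (isOpen_ne.mem_nhds hw2))
       exact this
  obtain ⟨_, ⟨⟨a1, a2⟩, b1, b2⟩, g, rfl⟩ := mem_closure_iff_nhds.1 hz2 _ (e1.and e2)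
  simp only [smul_smul] at a1 a2 b1 b2
  have k1 := key h1 (γ * g) a2
  have k2 := key h2 (γ * g) b2
  rw [k1, a1, b1, hvb] at k2
  simp at k2

lemma factor [Finite A] (hcZ : ∀ g : G, Continuous fun z : Z => g • z)
    (hminZ : ∀ z : Z, Dense (MulAction.orbit G z)) {x : G → A} {z0 : Z}
    (hT : ∀ a : G, ∃ O ∈ 𝓝 z0, ∀ γ : G, γ • z0 ∈ O → x (γ⁻¹ * a) = x a)
    (hR : ∀ (y : G → A) (z z' : Z), (y, z) ∈ Rel x z0 → (y, z') ∈ Rel x z0 → z = z') :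
    ∃ π : (G → A) → Z,
        ContinuousOn π (orbitClosure x) ∧
        Set.SurjOn π (orbitClosure x) Set.univ ∧
        (∀ g : G, ∀ y ∈ orbitClosure x, π (shiftAct g y) = g • π y) ∧
        Dense {z : Z | ∃! y : G → A, y ∈ orbitClosure x ∧ π y = z} ∧
        (∀ (W : Type) [MetricSpace W] [CompactSpace W] (act : G → W → W),
          (∀ g : G, Continuous (act g)) → act 1 = id →
          (∀ g h : G, act (g * h) = act g ∘ act h) →
          Equicontinuous act →
          ∀ q : (G → A) → W, ContinuousOn q (orbitClosure x) →
            Set.SurjOn q (orbitClosure x) Set.univ →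
            (∀ g : G, ∀ y ∈ orbitClosure x, q (shiftAct g y) = act g (q y)) →
            ∃ r : Z → W, Continuous r ∧ Function.Surjective r ∧
              (∀ (g : G) (z : Z), r (g • z) = act g (r z)) ∧
              ∀ y ∈ orbitClosure x, r (π y) = q y) := by
  classical
  have hcpt : IsCompact (Rel x z0) := isClosed_closure.isCompact
  have hXc : IsClosed (orbitClosure x) := isClosed_closure
  have hfib : ∀ (y : G → A) (h : G), (y, h • z0) ∈ Rel x z0 → y = shiftAct h x := by
    intro y h hy
    funext g
    obtain ⟨O, hO, hOx⟩ := hT (h⁻¹ * g)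
    have e1 : ∀ᶠ p : (G → A) × Z in 𝓝 (y, h • z0), p.1 g = y g :=
      by have := ev_pull (f := fun p : (G → A) × Z => p.1) (continuous_fst) (y, h • z0) rfl (ev_coord y g)
         exact this
    have e2 : ∀ᶠ p : (G → A) × Z in 𝓝 (y, h • z0), h⁻¹ • p.2 ∈ O :=
      ((hcZ h⁻¹).comp continuous_snd).continuousAt.eventually (by simpa using hO)
    obtain ⟨_, ⟨ha, hb⟩, k, rfl⟩ := mem_closure_iff_nhds.1 hy _ (e1.and e2)
    simp only [smul_smul] at ha hb
    have := hOx _ hb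
    rw [← ha]
    simp only [shiftAct]
    rw [← this]
    congr 1
    group
  have hRX : ∀ {y : G → A} {z : Z}, (y, z) ∈ Rel x z0 → y ∈ orbitClosure x := by
    intro y z h
    refine map_mem_closure continuous_fst h ?_
    rintro _ ⟨k, rfl⟩
    exact ⟨k, rfl⟩
  have hXR : ∀ y ∈ orbitClosure x, ∃ z, (y, z) ∈ Rel x z0 := by
    intro y hy
    have : orbitClosure x ⊆ Prod.fst '' Rel x z0 := by
      refine closure_minimal ?_ (hcpt.image continuous_fst).isClosed
      rintro _ ⟨g, rfl⟩
      exact ⟨(shiftAct g x, g • z0), subset_closure ⟨g, rfl⟩, rfl⟩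
    obtain ⟨⟨_, z⟩, h, rfl⟩ := this hy
    exact ⟨z, h⟩
  have hZR : ∀ z, ∃ y, (y, z) ∈ Rel x z0 := by
    intro z
    have : closure (MulAction.orbit G z0) ⊆ Prod.snd '' Rel x z0 := by
      refine closure_minimal ?_ (hcpt.image continuous_snd).isClosed
      rintro _ ⟨g, rfl⟩
      exact ⟨(shiftAct g x, g • z0), subset_closure ⟨g, rfl⟩, rfl⟩
    obtain ⟨⟨y, _⟩, h, rfl⟩ := this (hminZ z0 z)
    exact ⟨y, h⟩
  have hex : ∀ y : G → A, ∃ z : Z, y ∈ orbitClosure x → (y, z) ∈ Rel x z0 := by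
    intro y
    by_cases hy : y ∈ orbitClosure x
    · obtain ⟨z, hz⟩ := hXR y hy
      exact ⟨z, fun _ => hz⟩
    · exact ⟨z0, fun h => absurd h hy⟩
  choose π hπ using hex
  have hπe : ∀ {y z}, (y, z) ∈ Rel x z0 → π y = z := fun {y z} h => hR y _ _ (hπ y (hRX h)) h
  refine ⟨π, ?_, ?_, ?_, ?_, ?_⟩
  · rw [continuousOn_iff_isClosed]
    intro C hC
    refine ⟨Prod.fst '' (Rel x z0 ∩ Prod.snd ⁻¹' C),
      ((hcpt.inter_right (hC.preimage continuous_snd)).image continuous_fst).isClosed, ?_⟩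
    ext y
    constructor
    · rintro ⟨h, hy⟩
      exact ⟨⟨(y, π y), ⟨hπ y hy, h⟩, rfl⟩, hy⟩
    · rintro ⟨⟨⟨y', z⟩, ⟨h, hz⟩, rfl⟩, hy⟩
      refine ⟨?_, hy⟩
      show π y' ∈ C
      rw [hπe h]
      exact hz
  · intro z _
    obtain ⟨y, hy⟩ := hZR z
    exact ⟨y, hRX hy, hπe hy⟩
  · intro g y hy
    exact hπe (rel_shift hcZ g (hπ y hy))
  · refine (hminZ z0).mono ?_
    rintro _ ⟨h, rfl⟩
    have hm : (shiftAct h x, h • z0) ∈ Rel x z0 := subset_closure ⟨h, rfl⟩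
    refine ⟨shiftAct h x, ⟨hRX hm, hπe hm⟩, ?_⟩
    rintro y ⟨hy, hyz⟩
    apply hfib
    have := hπ y hy
    rw [hyz] at this
    exact this
  · intro W _ _ act hact h1 hmul hW q hq hqs hqe
    have hue := CompactSpace.uniformEquicontinuous_of_equicontinuous hW
    have hwd : ∀ y y' z, (y, z) ∈ Rel x z0 → (y', z) ∈ Rel x z0 → q y = q y' := by
      intro y y' z hy hy'
      let T : Set ((G → A) × (G → A) × Z) :=
        closure (Set.range (fun g : G => (shiftAct g y, shiftAct g y', g • z)))
      have hTc : IsCompact T := isClosed_closure.isCompact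
      obtain ⟨u, u', hu⟩ : ∃ u u', (u, u', z0) ∈ T := by
        have : closure (MulAction.orbit G z) ⊆
            (fun p : (G → A) × (G → A) × Z => p.2.2) '' T := by
          refine closure_minimal ?_
            (hTc.image (continuous_snd.comp continuous_snd)).isClosed
          rintro _ ⟨g, rfl⟩
          exact ⟨(shiftAct g y, shiftAct g y', g • z), subset_closure ⟨g, rfl⟩, rfl⟩
        obtain ⟨⟨u, u', w⟩, hu, hw⟩ := this (hminZ z z0)
        simp only at hw
        subst hw
        exact ⟨u, u', hu⟩
      have hu1 : (u, z0) ∈ Rel x z0 := by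
        have := map_mem_closure (f := fun p : (G → A) × (G → A) × Z => (p.1, p.2.2))
          (by fun_prop) hu (t := Rel x z0) (by
            rintro _ ⟨g, rfl⟩
            exact rel_shift hcZ g hy)
        have hRc : IsClosed (Rel x z0) := isClosed_closure
        rwa [hRc.closure_eq] at this
      have hu2 : (u', z0) ∈ Rel x z0 := by
        have := map_mem_closure (f := fun p : (G → A) × (G → A) × Z => (p.2.1, p.2.2))
          (by fun_prop) hu (t := Rel x z0) (by
            rintro _ ⟨g, rfl⟩
            exact rel_shift hcZ g hy')
        have hRc : IsClosed (Rel x z0) := isClosed_closure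
        rwa [hRc.closure_eq] at this
      have hux : u = u' := by
        rw [hfib u 1 (by simpa using hu1), hfib u' 1 (by simpa using hu2)]
      subst hux
      by_contra hne
      obtain ⟨δ, hδ, hd⟩ := Metric.uniformEquicontinuous_iff.1 hue _ (dist_pos.2 hne)
      have hqu : ∀ᶠ a in 𝓝 u, a ∈ orbitClosure x → dist (q a) (q u) < δ / 2 :=
        eventually_nhdsWithin_iff.1
          ((hq u (hRX hu1)).eventually (Metric.ball_mem_nhds (q u) (half_pos hδ)))
      have e1 : ∀ᶠ p : (G → A) × (G → A) × Z in 𝓝 (u, u, z0),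
          p.1 ∈ orbitClosure x → dist (q p.1) (q u) < δ / 2 :=
        by have := ev_pull (f := fun p : (G → A) × (G → A) × Z => p.1) (continuous_fst) (u, u, z0) rfl (hqu)
           exact this
      have e2 : ∀ᶠ p : (G → A) × (G → A) × Z in 𝓝 (u, u, z0),
          p.2.1 ∈ orbitClosure x → dist (q p.2.1) (q u) < δ / 2 :=
        by have := ev_pull (f := fun p : (G → A) × (G → A) × Z => p.2.1) (continuous_fst.comp continuous_snd) (u, u, z0) rfl (hqu)
           exact this
      obtain ⟨_, ⟨ha, hb⟩, g, rfl⟩ := mem_closure_iff_nhds.1 hu _ (e1.and e2)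
      have ha := ha (hRX (rel_shift hcZ g hy))
      have hb := hb (hRX (rel_shift hcZ g hy'))
      simp only at ha hb
      rw [hqe g y (hRX hy)] at ha
      rw [hqe g y' (hRX hy')] at hb
      have hlt : dist (act g (q y)) (act g (q y')) < δ :=
        (dist_triangle_right _ _ (q u)).trans_lt (by linarith)
      have := hd _ _ hlt g⁻¹
      have hinv : ∀ w, act g⁻¹ (act g w) = w := by
        intro w
        have := congrFun (hmul g⁻¹ g) w
        rw [inv_mul_cancel, h1] at this
        exact this.symm
      rw [hinv, hinv] at this
      exact lt_irrefl _ this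
    choose s hs using hZR
    refine ⟨fun z => q (s z), ?_, ?_, ?_, ?_⟩
    · rw [continuous_iff_isClosed]
      intro C hC
      have hcl : IsClosed (orbitClosure x ∩ q ⁻¹' C) := hq.preimage_isClosed_of_isClosed hXc hC
      have : (fun z => q (s z)) ⁻¹' C =
          Prod.snd '' (Rel x z0 ∩ Prod.fst ⁻¹' (orbitClosure x ∩ q ⁻¹' C)) := by
        ext z
        constructor
        · intro hz
          exact ⟨(s z, z), ⟨hs z, hRX (hs z), hz⟩, rfl⟩
        · rintro ⟨⟨y, z'⟩, ⟨h, -, hy⟩, rfl⟩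
          show q (s z') ∈ C
          rw [hwd _ _ _ (hs z') h]
          exact hy
      rw [this]
      exact ((hcpt.inter_right (hcl.preimage continuous_fst)).image continuous_snd).isClosed
    · intro w
      obtain ⟨y, hy, rfl⟩ := hqs (Set.mem_univ w)
      exact ⟨π y, hwd _ _ _ (hs _) (hπ y hy)⟩
    · intro g z
      show q (s (g • z)) = act g (q (s z))
      rw [← hqe g _ (hRX (hs z))]
      exact hwd _ _ _ (hs _) (rel_shift hcZ g (hs z))
    · intro y hy
      exact hwd _ _ _ (hs _) (hπ y hy)

end

open scoped Classical in
lemma no_measure {G A : Type*} [Group G] [TopologicalSpace A]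
    [DiscreteTopology A] [MeasurableSpace A] [DiscreteMeasurableSpace A]
    (K : Finset G) (κ : A → G) (x : G → A)
    (hx : ∀ h, 2 ≤ (K.filter (fun k => κ (x (h * k⁻¹)) = k)).card) :
    ¬ ∃ μ : Measure (G → A), IsProbabilityMeasure μ ∧
        μ (orbitClosure x) = 1 ∧ ∀ g : G, Measure.map (shiftAct g) μ = μ := by
  rintro ⟨μ, hμ, hμX, hinv⟩
  have hrule : ∀ y ∈ orbitClosure x, 2 ≤ (K.filter (fun k => κ (y k⁻¹) = k)).card := by
    intro y hy
    have e : ∀ᶠ y' in 𝓝 y, ∀ k ∈ K, y' k⁻¹ = y k⁻¹ :=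
      (Filter.eventually_all_finset K).2 (fun k _ => ev_coord y k⁻¹)
    obtain ⟨_, ha, g, rfl⟩ := mem_closure_iff_nhds.1 hy _ e
    have h1 := hx g⁻¹
    refine h1.trans (Finset.card_le_card ?_)
    intro k hk
    rw [Finset.mem_filter] at hk ⊢
    refine ⟨hk.1, ?_⟩
    rw [← ha k hk.1]
    exact hk.2
  have hms : ∀ g : G, Measurable (shiftAct g : (G → A) → (G → A)) := fun g =>
    measurable_pi_lambda _ (fun h => measurable_pi_apply _)
  let E : G → G → Set (G → A) := fun g k => {y | κ (y g) = k}
  have hE : ∀ g k, MeasurableSet (E g k) := by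
    intro g k
    have : E g k = (fun y : G → A => y g) ⁻¹' {a | κ a = k} := rfl
    rw [this]
    exact measurable_pi_apply g (MeasurableSet.of_discrete)
  have hE1 : ∀ k, μ (E k⁻¹ k) = μ (E 1 k) := by
    intro k
    conv_rhs => rw [← hinv k]
    rw [Measure.map_apply (hms k) (hE 1 k)]
    congr 1
    ext y
    simp [E, shiftAct]
  have hsum1 : ∑ k ∈ K, μ (E 1 k) ≤ 1 := by
    rw [← measure_biUnion_finset (fun k _ k' _ hkk => by
      show Disjoint _ _
      rw [Set.disjoint_left]
      intro y hy hy'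
      exact hkk (hy.symm.trans hy')) (fun k _ => hE 1 k)]
    exact prob_le_one
  have hsum2 : 2 ≤ ∑ k ∈ K, μ (E k⁻¹ k) := by
    have h1 : ∑ k ∈ K, μ (E k⁻¹ k) =
        ∫⁻ y, ∑ k ∈ K, (E k⁻¹ k).indicator (fun _ => (1 : ENNReal)) y ∂μ := by
      rw [lintegral_finsetSum _ (fun k _ => measurable_const.indicator (hE _ _))]
      refine Finset.sum_congr rfl fun k _ => ?_
      rw [lintegral_indicator_const (hE _ _), one_mul]
    have hcount : ∀ y, ∑ k ∈ K, (E k⁻¹ k).indicator (fun _ => (1 : ENNReal)) y =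
        ((K.filter (fun k => κ (y k⁻¹) = k)).card : ENNReal) := by
      intro y
      simp [Set.indicator_apply, E]
    have hm : Measurable (fun y => ∑ k ∈ K, (E k⁻¹ k).indicator (fun _ => (1 : ENNReal)) y) :=
      Finset.measurable_sum _ (fun k _ => measurable_const.indicator (hE _ _))
    have h2 := mul_meas_ge_le_lintegral (μ := μ) hm 2
    have h3 : 1 ≤ μ {y | 2 ≤ ∑ k ∈ K, (E k⁻¹ k).indicator (fun _ => (1 : ENNReal)) y} := by
      refine hμX.symm.le.trans (measure_mono ?_)
      intro y hy
      rw [Set.mem_setOf_eq, hcount]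
      exact_mod_cast hrule y hy
    rw [h1]
    refine le_trans ?_ h2
    calc (2 : ENNReal) = 2 * 1 := by norm_num
      _ ≤ _ := by gcongr
  rw [Finset.sum_congr rfl (fun k _ => hE1 k)] at hsum2
  exact absurd (hsum2.trans hsum1) (by norm_num)

end Toep

/-- for a non-amenable residually finite countable group G and any minimal
equicontinuous Cantor system (Z,G) with a free orbit, there is a Toeplitz G-subshift
with no invariant Borel probability measures whose maximal equicontinuous factor is
(Z,G). -/
theorem stmt_19 {G Z : Type*} [Group G] [Countable G] [Infinite G]
    (hNA : ¬ HasInvariantMeasuresAll G)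
    (hrf : ∀ g : G, g ≠ 1 → ∃ N : Subgroup G, N.Normal ∧ N.FiniteIndex ∧ g ∉ N)
    [MetricSpace Z] [CompactSpace Z] [TotallyDisconnectedSpace Z] [Nonempty Z]
    [MulAction G Z]
    (hperfZ : ∀ z : Z, ¬ IsOpen ({z} : Set Z))
    (hcZ : ∀ g : G, Continuous fun z : Z => g • z)
    (hminZ : ∀ z : Z, Dense (MulAction.orbit G z))
    (hequi : Equicontinuous fun g : G => fun z : Z => g • z)
    (hfree : ∃ z : Z, ∀ g : G, g • z = z → g = 1) :
    ∃ (m : ℕ) (x : G → Fin (m + 2)), IsToeplitz x ∧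
      -- the Toeplitz subshift has no invariant probability measures
      (¬ ∃ μ : Measure (G → Fin (m + 2)), IsProbabilityMeasure μ ∧
        μ (orbitClosure x) = 1 ∧ ∀ g : G, Measure.map (shiftAct g) μ = μ) ∧
      -- it is an almost one-to-one extension of (Z,G) ...
      ∃ π : (G → Fin (m + 2)) → Z,
        ContinuousOn π (orbitClosure x) ∧
        Set.SurjOn π (orbitClosure x) Set.univ ∧
        (∀ g : G, ∀ y ∈ orbitClosure x, π (shiftAct g y) = g • π y) ∧
        Dense {z : Z | ∃! y : G → Fin (m + 2), y ∈ orbitClosure x ∧ π y = z} ∧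
        -- ... and (Z,G) is its maximal equicontinuous factor: every factor map from the
        -- subshift onto an equicontinuous system factors through π
        (∀ (W : Type) [MetricSpace W] [CompactSpace W] (act : G → W → W),
          (∀ g : G, Continuous (act g)) → act 1 = id →
          (∀ g h : G, act (g * h) = act g ∘ act h) →
          Equicontinuous act →
          ∀ q : (G → Fin (m + 2)) → W, ContinuousOn q (orbitClosure x) →
            Set.SurjOn q (orbitClosure x) Set.univ →
            (∀ g : G, ∀ y ∈ orbitClosure x, q (shiftAct g y) = act g (q y)) →
            ∃ r : Z → W, Continuous r ∧ Function.Surjective r ∧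
              (∀ (g : G) (z : Z), r (g • z) = act g (r z)) ∧
              ∀ y ∈ orbitClosure x, r (π y) = q y) := by
  classical
  obtain ⟨z0, hz0⟩ := hfree
  obtain ⟨K, hKne, hK3⟩ := Toep.exists_expanding hNA
  let P : Subgroup G → Prop := fun Γ => Γ.FiniteIndex ∧ ∃ O ∈ nhds z0, ∀ g : G, g • z0 ∈ O → g ∈ Γ
  have hPT : P ⊤ := ⟨inferInstance, Set.univ, Filter.univ_mem, fun _ _ => trivial⟩
  have hP : ∀ Γ, P Γ → ∀ B : Finset G, 1 ∉ B → ∃ Γ' ≤ Γ, P Γ' ∧ ∀ b ∈ B, b ∉ Γ' := by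
    rintro Γ ⟨hΓ, O, hO, hOΓ⟩ B hB
    have hfin : ((fun b : G => b • z0) '' (B : Set G)).Finite := B.finite_toSet.image _
    have hnb : ((fun b : G => b • z0) '' (B : Set G))ᶜ ∈ nhds z0 := by
      apply hfin.isClosed.isOpen_compl.mem_nhds
      rintro ⟨b, hb, hbz⟩
      rw [hz0 b hbz] at hb
      exact hB hb
    obtain ⟨Γ₁, hf, h1, O', hO', h2⟩ := Toep.blockSub (G := G) hequi z0 hnb
    refine ⟨Γ ⊓ Γ₁, inf_le_left, ⟨inferInstance, O ∩ O', Filter.inter_mem hO hO',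
      fun g hg => ⟨hOΓ g hg.1, h2 g hg.2⟩⟩, fun b hb hbΓ => h1 b hbΓ.2 ⟨b, hb, rfl⟩⟩
  obtain ⟨x₁, hx₁K, hx₁T, hx₁⟩ := Toep.exists_toeplitz hKne hK3 P hPT hP
  obtain ⟨z1, hz1⟩ := Toep.exists_not_orbit (G := G) hperfZ z0
  obtain ⟨ψ, hψ, hψ1⟩ := Toep.exists_col hperfZ z1
  have hcard : 2 ≤ Fintype.card (K × Bool) := by
    rw [Fintype.card_prod, Fintype.card_coe, Fintype.card_bool]
    have := hKne.card_pos
    omega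
  obtain ⟨m, hm⟩ := Nat.exists_eq_add_of_le' hcard
  let e : K × Bool ≃ Fin (m + 2) := Fintype.equivFinOfCardEq hm
  let x : G → Fin (m + 2) := fun g => e (⟨x₁ g, hx₁K g⟩, ψ (g⁻¹ • z0))
  have hxP : ∀ a : G, ∃ Γ, P Γ ∧ ∀ γ ∈ Γ, x (γ⁻¹ * a) = x a := by
    intro a
    obtain ⟨Γ, ⟨hΓf, O, hO, hOΓ⟩, hΓ⟩ := hx₁T a
    have hev : {w : Z | ψ (a⁻¹ • w) = ψ (a⁻¹ • z0)} ∈ nhds z0 :=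
      (hcZ a⁻¹).continuousAt.eventually (hψ (a⁻¹ • z0) (hz1 a⁻¹))
    obtain ⟨Γ₁, hf, h1, O', hO', h2⟩ := Toep.blockSub (G := G) hequi z0 hev
    refine ⟨Γ ⊓ Γ₁, ⟨inferInstance, O ∩ O', Filter.inter_mem hO hO',
      fun g hg => ⟨hOΓ g hg.1, h2 g hg.2⟩⟩, fun γ hγ => ?_⟩
    have h3 : x₁ (γ⁻¹ * a) = x₁ a := hΓ _ (Γ.inv_mem hγ.1)
    have h4 : ψ ((γ⁻¹ * a)⁻¹ • z0) = ψ (a⁻¹ • z0) := by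
      have : ψ (a⁻¹ • γ • z0) = ψ (a⁻¹ • z0) := h1 γ hγ.2
      rw [mul_inv_rev, inv_inv, mul_smul]
      exact this
    simp only [x, h3, h4]
  refine ⟨m, x, ?_, ?_, ?_⟩
  · intro g
    obtain ⟨Γ, hΓ, h⟩ := hxP g
    exact ⟨Γ, hΓ.1, h⟩
  · apply Toep.no_measure K (fun a => ((e.symm a).1 : G)) x
    intro h
    simpa [x] using hx₁ h
  · apply Toep.factor hcZ hminZ (z0 := z0)
    · intro a
      obtain ⟨Γ, ⟨-, O, hO, hOΓ⟩, h⟩ := hxP a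
      exact ⟨O, hO, fun γ hγ => h γ (hOΓ γ hγ)⟩
    · intro y z z' h h'
      exact Toep.rel_sep hcZ hminZ hequi ψ hψ hψ1 (fun a => (e.symm a).2)
        (fun g => by simp [x]) h h'
end
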